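/- Let p̄ = (p(1), p(2), …) satisfy 0 ≤ p(i) < 1 and ∏_{i=1}^∞ (1 − p(i))^i > 0. Then for every first-order sentence ψ of the language L_≤ the limit lim_{n→∞} Prob(n,p̄;ψ) exists. -/

import Mathlib

open FirstOrder Filter

namespace RandomGraph

/-- The set of potential edges of a graph on `Fin n` (pairs `(v,w)` with `v < w`).
Vertex `v : Fin n` represents the number `v + 1` of the interval `[n] = {1, …, n}`. -/
abbrev EdgeIdx (n : ℕ) := {e : Fin n × Fin n // e.1 < e.2}

/-- An outcome of the random graph on `[n]`: a choice of which potential edges are present. -/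
abbrev Sample (n : ℕ) := EdgeIdx n → Bool

/-- Adjacency of two vertices (described by their values in `Fin n`) in the outcome `ω`. -/
def adjVal {n : ℕ} (ω : Sample n) (a b : ℕ) : Prop :=
  ∃ e : EdgeIdx n, ω e = true ∧
    ((e.1.1.val = a ∧ e.1.2.val = b) ∨ (e.1.1.val = b ∧ e.1.2.val = a))

/-- Adjacency of two vertices in the outcome `ω`. -/
def sampleAdj {n : ℕ} (ω : Sample n) (v w : Fin n) : Prop := adjVal ω v.val w.val

/-- The probability of the outcome `ω` in the model `G(n, p̄)`: each pair of distinct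
vertices at distance `d` is an edge with probability `p d`, independently.  (The value `p 0` is
never used, since distinct vertices are at distance at least 1.) -/
noncomputable def sampleWeight (p : ℕ → ℝ) {n : ℕ} (ω : Sample n) : ℝ :=
  ∏ e : EdgeIdx n,
    (if ω e then p (e.1.2.val - e.1.1.val) else 1 - p (e.1.2.val - e.1.1.val))

/-- The probability of the outcome `ω` in the circular model `C(n, p̄)`: vertices `v, w` are
adjacent with probability `p (min |v-w| (n - |v-w|))`, independently. -/
noncomputable def cWeight (p : ℕ → ℝ) {n : ℕ} (ω : Sample n) : ℝ :=
  ∏ e : EdgeIdx n,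
    (if ω e then p (min (e.1.2.val - e.1.1.val) (n - (e.1.2.val - e.1.1.val)))
      else 1 - p (min (e.1.2.val - e.1.1.val) (n - (e.1.2.val - e.1.1.val))))

open scoped Classical in
/-- The probability of the event `P` in the random graph `G(n, p̄)`. -/
noncomputable def Pr (p : ℕ → ℝ) (n : ℕ) (P : Sample n → Prop) : ℝ :=
  ∑ ω : Sample n, if P ω then sampleWeight p ω else 0

open scoped Classical in
/-- The probability of the event `P` in the circular random graph `C(n, p̄)`. -/
noncomputable def cPr (p : ℕ → ℝ) (n : ℕ) (P : Sample n → Prop) : ℝ :=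
  ∑ ω : Sample n, if P ω then cWeight p ω else 0

/-! ### The language `L` of graphs (also used as the language `L^c`) -/

/-- An outcome `ω` of the random graph, viewed as a structure of `FirstOrder.Language.graph`,
the language with a single binary adjacency predicate. -/
def graphStructure {n : ℕ} (ω : Sample n) : Language.graph.Structure (Fin n) where
  RelMap | .adj => fun x => sampleAdj ω (x 0) (x 1)

/-- Satisfaction of a sentence of the language `L` in the outcome `ω`. -/
def SatL {n : ℕ} (ω : Sample n) (ψ : Language.graph.Sentence) : Prop :=
  @Language.Sentence.Realize _ _ (graphStructure ω) ψ

/-- `Prob(n, p̄; ψ)` for a sentence `ψ` of the language `L`. -/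
noncomputable def ProbL (p : ℕ → ℝ) (n : ℕ) (ψ : Language.graph.Sentence) : ℝ :=
  Pr p n fun ω => SatL ω ψ

/-- The probability that `C(n, p̄)` satisfies a sentence `ψ` of the language `L^c = L`. -/
noncomputable def cProbL (p : ℕ → ℝ) (n : ℕ) (ψ : Language.graph.Sentence) : ℝ :=
  cPr p n fun ω => SatL ω ψ

/-! ### The language `L₊` -/

/-- The constants of the language `L₊`: the first element `1` and the last element `n`. -/
inductive plusFunc : ℕ → Type
  | one : plusFunc 0
  | last : plusFunc 0

/-- The relations of `L₊`: adjacency and successor. -/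
inductive plusRel : ℕ → Type
  | adj : plusRel 2
  | succ : plusRel 2

/-- The language `L₊` with adjacency, successor (`x = y + 1`), and constants `1` and `n`. -/
def Lplus : Language := ⟨plusFunc, plusRel⟩

/-- An outcome `ω` of the random graph on `[m+1]`, as an `L₊`-structure. -/
def plusStructure {m : ℕ} (ω : Sample (m + 1)) : Lplus.Structure (Fin (m + 1)) where
  funMap | .one => fun _ => 0 | .last => fun _ => Fin.last m
  RelMap
    | .adj => fun x => sampleAdj ω (x 0) (x 1)
    | .succ => fun x => (x 0).val = (x 1).val + 1

/-- `Prob(n, p̄; ψ)` for a sentence `ψ` of `L₊` (set to `0` in the irrelevant case `n = 0`,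
where the constants cannot be interpreted). -/
noncomputable def ProbPlus (p : ℕ → ℝ) : ℕ → Lplus.Sentence → ℝ
  | 0, _ => 0
  | (m + 1), ψ => Pr p (m + 1) fun ω => @Language.Sentence.Realize _ _ (plusStructure ω) ψ

/-! ### The language `L≤` -/

/-- The relations of `L≤`: adjacency and linear order. -/
inductive leRel : ℕ → Type
  | adj : leRel 2
  | le : leRel 2

/-- The language `L≤` with adjacency and a linear order. -/
def Lle : Language := ⟨fun _ => Empty, leRel⟩

/-- An outcome `ω` of the random graph on `[n]`, as an `L≤`-structure. -/
def leStructure {n : ℕ} (ω : Sample n) : Lle.Structure (Fin n) where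
  funMap := fun f _ => Empty.elim f
  RelMap
    | .adj => fun x => sampleAdj ω (x 0) (x 1)
    | .le => fun x => x 0 ≤ x 1

/-- Satisfaction of a sentence of `L≤` in the outcome `ω`. -/
def SatLe {n : ℕ} (ω : Sample n) (ψ : Lle.Sentence) : Prop :=
  @Language.Sentence.Realize _ _ (leStructure ω) ψ

/-- `Prob(n, p̄; ψ)` for a sentence `ψ` of `L≤`. -/
noncomputable def ProbLe (p : ℕ → ℝ) (n : ℕ) (ψ : Lle.Sentence) : ℝ :=
  Pr p n fun ω => SatLe ω ψ

/-! ### The circular languages `L₊^c` and `L≤^c` -/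

/-- The relations of `L₊^c`: adjacency and cyclic successor. -/
inductive plusCRel : ℕ → Type
  | adj : plusCRel 2
  | succ : plusCRel 2

/-- The language `L₊^c`, with adjacency and cyclic successor (`x = y + 1 (mod n)`). -/
def LplusC : Language := ⟨fun _ => Empty, plusCRel⟩

/-- An outcome `ω` of the circular random graph on `[n]`, as an `L₊^c`-structure. -/
def plusCStructure {n : ℕ} (ω : Sample n) : LplusC.Structure (Fin n) where
  funMap := fun f _ => Empty.elim f
  RelMap
    | .adj => fun x => sampleAdj ω (x 0) (x 1)
    | .succ => fun x => (x 0).val = ((x 1).val + 1) % n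

/-- The probability that `C(n, p̄)` satisfies a sentence `ψ` of the language `L₊^c`. -/
noncomputable def cProbPlus (p : ℕ → ℝ) (n : ℕ) (ψ : LplusC.Sentence) : ℝ :=
  cPr p n fun ω => @Language.Sentence.Realize _ _ (plusCStructure ω) ψ

/-- The relations of `L≤^c`: adjacency and the ternary clockwise-order predicate. -/
inductive cycRel : ℕ → Type
  | adj : cycRel 2
  | btw : cycRel 3

/-- The language `L≤^c`, with adjacency and the ternary clockwise-order predicate `C`. -/
def Lcyc : Language := ⟨fun _ => Empty, cycRel⟩

/-- `C(a, b, c)`: `a ≤ b ≤ c` holds after some cyclic permutation of `(a, b, c)`. -/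
def cyclicBtw {n : ℕ} (a b c : Fin n) : Prop :=
  (a ≤ b ∧ b ≤ c) ∨ (b ≤ c ∧ c ≤ a) ∨ (c ≤ a ∧ a ≤ b)

/-- An outcome `ω` of the circular random graph on `[n]`, as an `L≤^c`-structure. -/
def cycStructure {n : ℕ} (ω : Sample n) : Lcyc.Structure (Fin n) where
  funMap := fun f _ => Empty.elim f
  RelMap
    | .adj => fun x => sampleAdj ω (x 0) (x 1)
    | .btw => fun x => cyclicBtw (x 0) (x 1) (x 2)

/-- Satisfaction of a sentence of `L≤^c` in the outcome `ω`. -/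
def SatCyc {n : ℕ} (ω : Sample n) (ψ : Lcyc.Sentence) : Prop :=
  @Language.Sentence.Realize _ _ (cycStructure ω) ψ

/-- The probability that `C(n, p̄)` satisfies a sentence `ψ` of the language `L≤^c`. -/
noncomputable def cProbCyc (p : ℕ → ℝ) (n : ℕ) (ψ : Lcyc.Sentence) : ℝ :=
  cPr p n fun ω => SatCyc ω ψ

/-!
The types of finite ordered graphs with respect to the `k`-round Ehrenfeucht–Fraïssé game form a
finite monoid under the ordered sum, and a long sum of copies of a graph does not change its type
when one more copy is added, so this monoid is aperiodic. Hence among the types that occur with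
positive probability there is an `e` with `e * x * e = e` for all such types `x`.

Let `W` be a graph on `w` vertices of type `e`. A *marker* is a copy of `W` on an interval which no
edge leaves or passes over. There are at most `i` edges of length `i` over a given gap, so the
hypothesis on `∏ (1 - p i) ^ i` bounds the probability of a marker at a given place from below and
makes long edges over a given gap unlikely. Up to such long edges, the markers in disjoint blocks
are independent, so the first `T` vertices contain a marker with probability close to `1` uniformly
in `n`, and so do the last `T`. When both do, everything between the two markers is absorbed by `e`,
and the type of the whole graph is the product of the types of the first and the last `T` vertices.
The law of this product does not depend on `n ≥ 2 * T`, so the probabilities form a Cauchy sequence.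
-/

/-! ### Ehrenfeucht–Fraïssé games -/

section EhrenfeuchtFraisse

open Language Structure

universe u v w

variable {L : FirstOrder.Language.{u, v}} {M N P : Type*} [L.Structure M] [L.Structure N]
  [L.Structure P]

/-- A set of pairs of elements of `M` and `N` is a partial isomorphism if it respects equality and
all relations of `L`. Function symbols are ignored: the games below are for relational `L`. -/
def IsPartialIso (L : Language) {M N : Type*} [L.Structure M] [L.Structure N]
    (l : Set (M × N)) : Prop :=
  (∀ x ∈ l, ∀ y ∈ l, x.1 = y.1 ↔ x.2 = y.2) ∧
    ∀ {n : ℕ} (R : L.Relations n) (x : Fin n → M × N), (∀ i, x i ∈ l) →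
      (RelMap R (fun i => (x i).1) ↔ RelMap R (fun i => (x i).2))

/-- Duplicator wins the `k`-round Ehrenfeucht–Fraïssé game on `M` and `N` from the position in which
the pairs in `l` have been played. -/
def DuplicatorWins (L : Language) {M N : Type*} [L.Structure M] [L.Structure N] :
    ℕ → Set (M × N) → Prop
  | 0, l => IsPartialIso L l
  | k + 1, l => DuplicatorWins L k l ∧ (∀ a, ∃ b, DuplicatorWins L k (insert (a, b) l)) ∧
      ∀ b, ∃ a, DuplicatorWins L k (insert (a, b) l)

namespace DuplicatorWins

theorem of_le {k m : ℕ} {l : Set (M × N)} (hkm : k ≤ m) (h : DuplicatorWins L m l) :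
    DuplicatorWins L k l := by
  induction m, hkm using Nat.le_induction with
  | base => exact h
  | succ m _ ih => exact ih h.1

theorem mono {k : ℕ} {l l' : Set (M × N)} (h : DuplicatorWins L k l) (hl : l' ⊆ l) :
    DuplicatorWins L k l' := by
  induction k generalizing l l' with
  | zero =>
    exact ⟨fun x hx y hy => h.1 x (hl hx) y (hl hy), fun R x hx => h.2 R x fun i => hl (hx i)⟩
  | succ k ih =>
    have insert_subset (c : M × N) : insert c l' ⊆ insert c l := Set.insert_subset_insert hl
    exact ⟨ih h.1 hl, fun a => (h.2.1 a).imp fun b hb => ih hb (insert_subset _),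
      fun b => (h.2.2 b).imp fun a ha => ih ha (insert_subset _)⟩

theorem symm {k : ℕ} {l : Set (M × N)} (h : DuplicatorWins L k l) :
    DuplicatorWins L k (Prod.swap ⁻¹' l) := by
  induction k generalizing l with
  | zero =>
    exact ⟨fun x hx y hy => (h.1 _ hx _ hy).symm, fun R x hx => (h.2 R (Prod.swap ∘ x) hx).symm⟩
  | succ k ih =>
    have insert_subset (a : M) (b : N) :
        insert (b, a) (Prod.swap ⁻¹' l) ⊆ Prod.swap ⁻¹' insert (a, b) l := by
      rintro x (rfl | hx)
      exacts [Or.inl rfl, Or.inr hx]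
    exact ⟨ih h.1, fun b => (h.2.2 b).imp fun a ha => (ih ha).mono (insert_subset a b),
      fun a => (h.2.1 a).imp fun b hb => (ih hb).mono (insert_subset a b)⟩

theorem trans {k : ℕ} {l : Set (M × N)} {l' : Set (N × P)} (h : DuplicatorWins L k l)
    (h' : DuplicatorWins L k l') :
    DuplicatorWins L k {x : M × P | ∃ b, (x.1, b) ∈ l ∧ (b, x.2) ∈ l'} := by
  induction k generalizing l l' with
  | zero =>
    refine ⟨fun x ⟨b, hb, hb'⟩ y ⟨c, hc, hc'⟩ => (h.1 _ hb _ hc).trans (h'.1 _ hb' _ hc'),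
      fun R x hx => ?_⟩
    choose b hb hb' using hx
    exact (h.2 R (fun i => ((x i).1, b i)) hb).trans (h'.2 R (fun i => (b i, (x i).2)) hb')
  | succ k ih =>
    have insert_subset (a : M) (b : N) (c : P) :
        insert (a, c) {x : M × P | ∃ b, (x.1, b) ∈ l ∧ (b, x.2) ∈ l'} ⊆
          {x | ∃ d, (x.1, d) ∈ insert (a, b) l ∧ (d, x.2) ∈ insert (b, c) l'} := by
      rintro x (rfl | ⟨d, hd, hd'⟩)
      exacts [⟨b, Or.inl rfl, Or.inl rfl⟩, ⟨d, Or.inr hd, Or.inr hd'⟩]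
    refine ⟨ih h.1 h'.1, fun a => ?_, fun c => ?_⟩
    · obtain ⟨b, hb⟩ := h.2.1 a
      obtain ⟨c, hc⟩ := h'.2.1 b
      exact ⟨c, (ih hb hc).mono (insert_subset a b c)⟩
    · obtain ⟨b, hb⟩ := h'.2.2 c
      obtain ⟨a, ha⟩ := h.2.2 b
      exact ⟨a, (ih ha hb).mono (insert_subset a b c)⟩

theorem of_equiv (f : M ≃[L] N) (k : ℕ) : DuplicatorWins L k {x : M × N | f x.1 = x.2} := by
  induction k with
  | zero =>
    refine ⟨fun x hx y hy => ?_, fun R x hx => ?_⟩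
    · rw [← hx, ← hy, f.injective.eq_iff]
    · rw [← f.map_rel R, ← funext hx]
      rfl
  | succ k ih =>
    have insert_subset {a : M} {b : N} (hab : f a = b) :
        insert (a, b) {x : M × N | f x.1 = x.2} ⊆ {x : M × N | f x.1 = x.2} :=
      Set.insert_subset hab subset_rfl
    exact ⟨ih, fun a => ⟨f a, ih.mono (insert_subset rfl)⟩,
      fun b => ⟨f.symm b, ih.mono (insert_subset (f.apply_symm_apply b))⟩⟩

end DuplicatorWins

/-- The quantifier rank of a formula: the depth of nesting of its quantifiers. -/
def quantifierRank {α : Type*} : ∀ {n : ℕ}, L.BoundedFormula α n → ℕ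
  | _, .falsum => 0
  | _, .equal _ _ => 0
  | _, .rel _ _ => 0
  | _, .imp φ ψ => max (quantifierRank φ) (quantifierRank ψ)
  | _, .all φ => quantifierRank φ + 1

theorem realize_term_pair_mem [L.IsRelational] {α : Type*} {v : α → M} {w : α → N}
    {l : Set (M × N)} (h : ∀ i, (v i, w i) ∈ l) (t : L.Term α) :
    (t.realize v, t.realize w) ∈ l := by
  cases t with
  | var i => exact h i
  | func f => exact isEmptyElim f

namespace DuplicatorWins

theorem realize_iff [L.IsRelational] {α : Type*} {n : ℕ} (φ : L.BoundedFormula α n)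
    {l : Set (M × N)} (hl : DuplicatorWins L (quantifierRank φ) l) {v : α → M} {w : α → N}
    {xs : Fin n → M} {ys : Fin n → N}
    (h : ∀ i, (Sum.elim v xs i, Sum.elim w ys i) ∈ l) :
    φ.Realize v xs ↔ φ.Realize w ys := by
  induction φ generalizing l with
  | falsum => rfl
  | equal t₁ t₂ => exact hl.1 _ (realize_term_pair_mem h t₁) _ (realize_term_pair_mem h t₂)
  | rel R ts => exact hl.2 R _ fun i => realize_term_pair_mem h (ts i)
  | imp φ ψ ihφ ihψ =>
    exact imp_congr (ihφ (hl.of_le (le_max_left _ _)) h) (ihψ (hl.of_le (le_max_right _ _)) h)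
  | all φ ih =>
    have step {a : M} {b : N} (hab : DuplicatorWins L (quantifierRank φ) (insert (a, b) l)) :
        φ.Realize v (Fin.snoc xs a) ↔ φ.Realize w (Fin.snoc ys b) := by
      refine ih hab ?_
      rintro (i | i)
      · exact Or.inr (h (.inl i))
      · refine Fin.lastCases ?_ (fun j => ?_) i
        · simp
        · simpa using Or.inr (h (.inr j))
    exact ⟨fun H b => (hl.2.2 b).elim fun a ha => (step ha).1 (H a),
      fun H a => (hl.2.1 a).elim fun b hb => (step hb).2 (H b)⟩

end DuplicatorWins

variable (L) in
/-- The rank-`k` types of `r`-tuples, as syntactic objects. At rank `0` such a type records which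
entries are equal and which relations hold; at rank `k + 1` it records the rank-`k` types of all
one-element extensions. -/
def TupleType : ℕ → ℕ → Type v
  | 0, r => Set (Fin r × Fin r) × ∀ R : Σ n, L.Relations n, Set (Fin R.1 → Fin r)
  | k + 1, r => TupleType k r × Set (TupleType k (r + 1))

theorem finite_tupleType [Finite (Σ n, L.Relations n)] (k r : ℕ) : Finite (TupleType L k r) := by
  induction k generalizing r with
  | zero =>
    unfold TupleType
    infer_instance
  | succ k ih =>
    have := ih r
    have := ih (r + 1)
    unfold TupleType
    infer_instance

variable (L) in
/-- The rank-`k` type of a tuple of elements of a structure. -/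
def tupleType : ∀ (k : ℕ) {r : ℕ}, (Fin r → M) → TupleType L k r
  | 0, _, v => ({ij | v ij.1 = v ij.2}, fun R => {i | RelMap R.2 (v ∘ i)})
  | k + 1, _, v => (tupleType k v, Set.range fun a => tupleType k (Fin.snoc v a : Fin _ → M))

theorem insert_range_prodMk_subset {r : ℕ} (v : Fin r → M) (w : Fin r → N) (a : M) (b : N) :
    insert (a, b) (Set.range fun i => (v i, w i)) ⊆ Set.range fun i =>
      ((Fin.snoc v a : Fin (r + 1) → M) i, (Fin.snoc w b : Fin (r + 1) → N) i) := by
  rintro x (rfl | ⟨i, rfl⟩)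
  exacts [⟨Fin.last r, by simp⟩, ⟨i.castSucc, by simp⟩]

theorem DuplicatorWins.of_tupleType_eq {k r : ℕ} {v : Fin r → M} {w : Fin r → N}
    (h : tupleType L k v = tupleType L k w) :
    DuplicatorWins L k (Set.range fun i => (v i, w i)) := by
  induction k generalizing r with
  | zero =>
    obtain ⟨heq, hrel⟩ := Prod.ext_iff.1 h
    refine ⟨?_, fun R x hx => ?_⟩
    · rintro _ ⟨i, rfl⟩ _ ⟨j, rfl⟩
      exact Set.ext_iff.1 heq (i, j)
    · choose i hi using hx
      obtain rfl : (fun j => (v (i j), w (i j))) = x := funext hi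
      exact Set.ext_iff.1 (congrFun hrel ⟨_, R⟩) i
  | succ k ih =>
    obtain ⟨htype, hext⟩ := Prod.ext_iff.1 h
    refine ⟨ih htype, fun a => ?_, fun b => ?_⟩
    · obtain ⟨b, hb⟩ := hext.le (Set.mem_range_self a)
      exact ⟨b, (ih hb.symm).mono (insert_range_prodMk_subset v w a b)⟩
    · obtain ⟨a, ha⟩ := hext.ge (Set.mem_range_self b)
      exact ⟨a, (ih ha).mono (insert_range_prodMk_subset v w a b)⟩

variable (L) in
/-- Equivalence of `L`-structures up to the `k`-round Ehrenfeucht–Fraïssé game. -/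
def efSetoid (k : ℕ) : Setoid (CategoryTheory.Bundled.{w} L.Structure) where
  r A B := DuplicatorWins L k (∅ : Set (A × B))
  iseqv :=
    ⟨fun A => (DuplicatorWins.of_equiv (.refl L A) k).mono (Set.empty_subset _),
      fun h => h.symm, fun h h' => (h.trans h').mono (Set.empty_subset _)⟩

variable (L) in
/-- The rank-`k` types of `L`-structures, that is, the structures up to the `k`-round game. -/
def EFType (k : ℕ) : Type (max u v (w + 1)) := Quotient (efSetoid.{u, v, w} L k)

variable (L) in
/-- The rank-`k` type of a structure. -/
def efType (k : ℕ) (A : Type w) [L.Structure A] : EFType.{u, v, w} L k :=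
  Quotient.mk _ (CategoryTheory.Bundled.of A)

theorem efType_eq_iff {k : ℕ} {A B : Type w} [L.Structure A] [L.Structure B] :
    efType L k A = efType L k B ↔ DuplicatorWins L k (∅ : Set (A × B)) :=
  Quotient.eq (r := efSetoid L k)

theorem efType_eq_of_equiv {A B : Type w} [L.Structure A] [L.Structure B] (f : A ≃[L] B) (k : ℕ) :
    efType L k A = efType L k B :=
  efType_eq_iff.2 ((DuplicatorWins.of_equiv f k).mono (Set.empty_subset _))

namespace EFType

instance [Finite (Σ n, L.Relations n)] (k : ℕ) : Finite (EFType.{u, v, w} L k) := by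
  have := finite_tupleType (L := L) k 0
  refine Finite.of_injective (fun τ : EFType L k => tupleType L k (Fin.elim0 : Fin 0 → τ.out)) ?_
  intro σ τ h
  rw [← Quotient.out_eq σ, ← Quotient.out_eq τ]
  exact Quotient.sound ((DuplicatorWins.of_tupleType_eq h).mono (Set.empty_subset _))

/-- Truth of a sentence in the structures of a given type, whose rank is the quantifier rank of the
sentence. -/
def Satisfies [L.IsRelational] (ψ : L.Sentence) : EFType.{u, v, w} L (quantifierRank ψ) → Prop :=
  Quotient.lift (fun A => A ⊨ ψ) fun _ _ h => propext (DuplicatorWins.realize_iff ψ h nofun)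

end EFType

end EhrenfeuchtFraisse

/-! ### The monoid of types of ordered graphs -/

section OrderedGraphs

open Language Structure

instance : Lle.IsRelational := fun _ => inferInstanceAs (IsEmpty Empty)

instance : Finite (Σ n, Lle.Relations n) :=
  Finite.of_surjective (fun b : Bool => if b then ⟨2, leRel.adj⟩ else ⟨2, leRel.le⟩) fun
    | ⟨_, .adj⟩ => ⟨true, rfl⟩
    | ⟨_, .le⟩ => ⟨false, rfl⟩

section SumPosition

variable {α' β' α β : Type*}

/-- The position in the game on two ordered sums made up of positions in the games on the
summands. -/
def sumPosition (l : Set (α × β)) (l' : Set (α' × β')) : Set ((α ⊕ α') × (β ⊕ β')) :=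
  Prod.map Sum.inl Sum.inl '' l ∪ Prod.map Sum.inr Sum.inr '' l'

theorem insert_inl_sumPosition (a : α) (b : β) (l : Set (α × β)) (l' : Set (α' × β')) :
    insert (Sum.inl a, Sum.inl b) (sumPosition l l') = sumPosition (insert (a, b) l) l' := by
  simp [sumPosition, Set.image_insert_eq, Set.insert_union]

theorem insert_inr_sumPosition (a : α') (b : β') (l : Set (α × β)) (l' : Set (α' × β')) :
    insert (Sum.inr a, Sum.inr b) (sumPosition l l') = sumPosition l (insert (a, b) l') := by
  simp [sumPosition, Set.image_insert_eq, Set.union_insert]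

end SumPosition

/-- The `L≤`-structure with given order and adjacency relations. -/
abbrev mkStructure {M : Type*} (le adj : M → M → Prop) : Lle.Structure M where
  funMap f _ := Empty.elim f
  RelMap
    | .adj => fun x => adj (x 0) (x 1)
    | .le => fun x => le (x 0) (x 1)

variable {M N M' N' : Type} [Lle.Structure M'] [Lle.Structure N'] [Lle.Structure M]
  [Lle.Structure N]

/-- The order relation of an `L≤`-structure. -/
def Le (x y : M) : Prop := RelMap (L := Lle) leRel.le ![x, y]

/-- The adjacency relation of an `L≤`-structure. -/
def Adj (x y : M) : Prop := RelMap (L := Lle) leRel.adj ![x, y]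

theorem relMap_le_iff (x : Fin 2 → M) : RelMap (L := Lle) leRel.le x ↔ Le (x 0) (x 1) := by
  rw [Le, ← FinVec.etaExpand_eq x]
  rfl

theorem relMap_adj_iff (x : Fin 2 → M) : RelMap (L := Lle) leRel.adj x ↔ Adj (x 0) (x 1) := by
  rw [Adj, ← FinVec.etaExpand_eq x]
  rfl

theorem isPartialIso_iff {l : Set (M × N)} :
    IsPartialIso Lle l ↔ ∀ x ∈ l, ∀ y ∈ l,
      (x.1 = y.1 ↔ x.2 = y.2) ∧ (Le x.1 y.1 ↔ Le x.2 y.2) ∧ (Adj x.1 y.1 ↔ Adj x.2 y.2) := by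
  refine ⟨fun h x hx y hy => ⟨h.1 x hx y hy, ?_, ?_⟩,
    fun h => ⟨fun x hx y hy => (h x hx y hy).1, ?_⟩⟩
  · have := h.2 (leRel.le : Lle.Relations 2) ![x, y] (by simp [Fin.forall_fin_two, hx, hy])
    rwa [relMap_le_iff, relMap_le_iff] at this
  · have := h.2 (leRel.adj : Lle.Relations 2) ![x, y] (by simp [Fin.forall_fin_two, hx, hy])
    rwa [relMap_adj_iff, relMap_adj_iff] at this
  · rintro n (_ | _) x hx
    · rw [relMap_adj_iff, relMap_adj_iff]
      exact (h _ (hx 0) _ (hx 1)).2.2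
    · rw [relMap_le_iff, relMap_le_iff]
      exact (h _ (hx 0) _ (hx 1)).2.1

/-- The isomorphism of `L≤`-structures given by a bijection preserving order and adjacency. -/
def isoOfEquiv (f : M ≃ N) (hle : ∀ x y, Le (f x) (f y) ↔ Le x y)
    (hadj : ∀ x y, Adj (f x) (f y) ↔ Adj x y) : M ≃[Lle] N where
  toEquiv := f
  map_fun' := fun g => Empty.elim g
  map_rel' := by
    rintro n (_ | _) x
    · exact ((relMap_adj_iff _).trans (hadj _ _)).trans (relMap_adj_iff x).symm
    · exact ((relMap_le_iff _).trans (hle _ _)).trans (relMap_le_iff x).symm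

theorem le_map_iff (f : M ≃[Lle] N) (x y : M) : Le (f x) (f y) ↔ Le x y :=
  (relMap_le_iff (f ∘ ![x, y])).symm.trans (f.map_rel (leRel.le : Lle.Relations 2) ![x, y])

theorem adj_map_iff (f : M ≃[Lle] N) (x y : M) : Adj (f x) (f y) ↔ Adj x y :=
  (relMap_adj_iff (f ∘ ![x, y])).symm.trans (f.map_rel (leRel.adj : Lle.Relations 2) ![x, y])

/-- The empty ordered graph. -/
instance : Lle.Structure Empty := mkStructure (fun x => x.elim) fun x => x.elim

/-- The ordered sum: all of `M` precedes all of `N` and there are no edges in between. -/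
instance : Lle.Structure (M ⊕ N) := mkStructure (Sum.Lex Le Le) (Sum.LiftRel Adj Adj)

theorem le_sum_iff (x y : M ⊕ N) : Le x y ↔ Sum.Lex Le Le x y := Iff.rfl

theorem adj_sum_iff (x y : M ⊕ N) : Adj x y ↔ Sum.LiftRel Adj Adj x y := Iff.rfl

/-- Summands may be replaced by isomorphic ones in an ordered sum. -/
def sumCongrIso (f : M ≃[Lle] N) (g : M' ≃[Lle] N') : (M ⊕ M') ≃[Lle] (N ⊕ N') :=
  isoOfEquiv (Equiv.sumCongr (f : M ≃ N) (g : M' ≃ N'))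
    (by rintro (x | x) (y | y) <;> simp [le_sum_iff, le_map_iff])
    (by rintro (x | x) (y | y) <;> simp [adj_sum_iff, adj_map_iff])

variable (M' M N) in
/-- Associativity of the ordered sum. -/
def sumAssocIso : ((M ⊕ N) ⊕ M') ≃[Lle] (M ⊕ (N ⊕ M')) :=
  isoOfEquiv (Equiv.sumAssoc M N M')
    (by rintro ((x | x) | x) ((y | y) | y) <;> simp [le_sum_iff])
    (by rintro ((x | x) | x) ((y | y) | y) <;> simp [adj_sum_iff])

variable (M) in
/-- The empty ordered graph is a left unit for the ordered sum. -/
def emptySumIso : (Empty ⊕ M) ≃[Lle] M :=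
  isoOfEquiv (Equiv.emptySum Empty M)
    (by rintro (⟨⟨⟩⟩ | x) (⟨⟨⟩⟩ | y); simp [le_sum_iff])
    (by rintro (⟨⟨⟩⟩ | x) (⟨⟨⟩⟩ | y); simp [adj_sum_iff])

variable (M) in
/-- The empty ordered graph is a right unit for the ordered sum. -/
def sumEmptyIso : (M ⊕ Empty) ≃[Lle] M :=
  isoOfEquiv (Equiv.sumEmpty M Empty)
    (by rintro (x | ⟨⟨⟩⟩) (y | ⟨⟨⟩⟩); simp [le_sum_iff])
    (by rintro (x | ⟨⟨⟩⟩) (y | ⟨⟨⟩⟩); simp [adj_sum_iff])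

theorem DuplicatorWins.sum {k : ℕ} {l : Set (M × N)} {l' : Set (M' × N')}
    (h : DuplicatorWins Lle k l) (h' : DuplicatorWins Lle k l') :
    DuplicatorWins Lle k (sumPosition l l') := by
  induction k generalizing l l' with
  | zero =>
    have hl := isPartialIso_iff.1 h
    have hl' := isPartialIso_iff.1 h'
    refine isPartialIso_iff.2 ?_
    rintro _ (⟨x, hx, rfl⟩ | ⟨x, hx, rfl⟩) _ (⟨y, hy, rfl⟩ | ⟨y, hy, rfl⟩)
    · simpa [le_sum_iff, adj_sum_iff] using hl x hx y hy
    · simp [le_sum_iff, adj_sum_iff]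
    · simp [le_sum_iff, adj_sum_iff]
    · simpa [le_sum_iff, adj_sum_iff] using hl' x hx y hy
  | succ k ih =>
    have reply_inl {a : M} {b : N} (hab : DuplicatorWins Lle k (insert (a, b) l)) :
        DuplicatorWins Lle k (insert (Sum.inl a, Sum.inl b) (sumPosition l l')) :=
      insert_inl_sumPosition a b l l' ▸ ih hab h'.1
    have reply_inr {a : M'} {b : N'} (hab : DuplicatorWins Lle k (insert (a, b) l')) :
        DuplicatorWins Lle k (insert (Sum.inr a, Sum.inr b) (sumPosition l l')) :=
      insert_inr_sumPosition a b l l' ▸ ih h.1 hab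
    refine ⟨ih h.1 h'.1, ?_, ?_⟩
    · rintro (a | a)
      · exact (h.2.1 a).elim fun b hb => ⟨.inl b, reply_inl hb⟩
      · exact (h'.2.1 a).elim fun b hb => ⟨.inr b, reply_inr hb⟩
    · rintro (b | b)
      · exact (h.2.2 b).elim fun a ha => ⟨.inl a, reply_inl ha⟩
      · exact (h'.2.2 b).elim fun a ha => ⟨.inr a, reply_inr ha⟩

namespace EFType

variable {k : ℕ}

instance : Mul (EFType.{0, 0, 0} Lle k) where
  mul := Quotient.map₂ (fun A B => CategoryTheory.Bundled.of (A ⊕ B))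
    fun _ _ h _ _ h' => (h.sum h').mono (Set.empty_subset _)

instance : One (EFType.{0, 0, 0} Lle k) := ⟨efType Lle k Empty⟩

theorem efType_sum : efType Lle k (M ⊕ N) = efType Lle k M * efType Lle k N := rfl

instance : Monoid (EFType.{0, 0, 0} Lle k) where
  mul_assoc := by
    rintro ⟨A⟩ ⟨B⟩ ⟨C⟩
    exact efType_eq_of_equiv (sumAssocIso A B C) k
  one_mul := by
    rintro ⟨A⟩
    exact efType_eq_of_equiv (emptySumIso A) k
  mul_one := by
    rintro ⟨A⟩
    exact efType_eq_of_equiv (sumEmptyIso A) k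

end EFType

/-- The ordered sum of `n` copies of `M`. -/
def Copies (M : Type) : ℕ → Type
  | 0 => Empty
  | n + 1 => M ⊕ Copies M n

instance Copies.structure : ∀ n, Lle.Structure (Copies M n)
  | 0 => inferInstanceAs (Lle.Structure Empty)
  | n + 1 => have := Copies.structure n; inferInstanceAs (Lle.Structure (M ⊕ Copies M n))

variable (M) in
theorem efType_copies (k n : ℕ) : efType Lle k (Copies M n) = efType Lle k M ^ n := by
  induction n with
  | zero => rfl
  | succ n ih => rw [pow_succ', ← ih]; rfl

theorem exists_copies_iso_around {n : ℕ} (c : Copies M n) :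
    ∃ i j, i + j + 1 = n ∧ ∃ (a : M) (f : Copies M n ≃[Lle] (Copies M i ⊕ (M ⊕ Copies M j))),
      f c = Sum.inr (Sum.inl a) := by
  induction n with
  | zero => exact Empty.elim c
  | succ n ih =>
    rcases c with a | c
    · exact ⟨0, n, by omega, a, (emptySumIso _).symm, rfl⟩
    · obtain ⟨i, j, h, a, f, hf⟩ := ih c
      refine ⟨i + 1, j, by omega, a,
        (sumAssocIso M (Copies M i) (M ⊕ Copies M j)).symm.comp (sumCongrIso (.refl Lle M) f), ?_⟩
      change (Equiv.sumAssoc _ _ _).symm (Sum.inr (f c)) = _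
      rw [hf]
      rfl

variable (M) in
theorem nonempty_copies_add_iso (i j : ℕ) :
    Nonempty ((Copies M i ⊕ (M ⊕ Copies M j)) ≃[Lle] Copies M (i + j + 1)) := by
  induction i with
  | zero =>
    rw [Nat.zero_add]
    exact ⟨emptySumIso _⟩
  | succ i ih =>
    obtain ⟨f⟩ := ih
    rw [show i + 1 + j + 1 = (i + j + 1) + 1 by omega]
    exact ⟨(sumCongrIso (.refl Lle M) f).comp (sumAssocIso M (Copies M i) (M ⊕ Copies M j))⟩

theorem exists_reply_copies {k n i j i' j' : ℕ} {c : Copies M n} {a : M}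
    (f : Copies M n ≃[Lle] (Copies M i ⊕ (M ⊕ Copies M j))) (hf : f c = Sum.inr (Sum.inl a))
    (hi : efType Lle k (Copies M i) = efType Lle k (Copies M i'))
    (hj : efType Lle k (Copies M j) = efType Lle k (Copies M j')) :
    ∃ d : Copies M (i' + j' + 1), DuplicatorWins Lle k {(c, d)} := by
  obtain ⟨g⟩ := nonempty_copies_add_iso M i' j'
  have middle := (efType_eq_iff.1 hi).sum
    ((DuplicatorWins.of_equiv (.refl Lle M) k).sum (efType_eq_iff.1 hj))
  refine ⟨g (Sum.inr (Sum.inl a)), (((DuplicatorWins.of_equiv f k).trans middle).trans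
    (DuplicatorWins.of_equiv g k)).mono (Set.singleton_subset_iff.2 ?_)⟩
  exact ⟨_, ⟨_, hf, .inr ⟨(.inl a, .inl a), .inl ⟨(a, a), rfl, rfl⟩, rfl⟩⟩, rfl⟩

theorem exists_efType_copies_eq (k : ℕ) :
    ∃ m, ∀ (M : Type) [Lle.Structure M] (n n' : ℕ), m ≤ n → m ≤ n' →
      efType Lle k (Copies M n) = efType Lle k (Copies M n') := by
  induction k with
  | zero =>
    exact ⟨0, fun M _ n n' _ _ => efType_eq_iff.2 (isPartialIso_iff.2 fun x hx => absurd hx id)⟩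
  | succ k ih =>
    obtain ⟨m, hm⟩ := ih
    refine ⟨2 * m + 1, fun M _ n n' hn hn' => efType_eq_iff.2 ?_⟩
    -- Duplicator answers in a copy with equally many, or at least `m`, copies on each side.
    have reply {n n' : ℕ} (hn : 2 * m + 1 ≤ n) (hn' : 2 * m + 1 ≤ n') (c : Copies M n) :
        ∃ d : Copies M n', DuplicatorWins Lle k {(c, d)} := by
      obtain ⟨i, j, hij, a, f, hf⟩ := exists_copies_iso_around c
      obtain ⟨i', j', rfl, hi, hj⟩ : ∃ i' j', i' + j' + 1 = n' ∧
          (i = i' ∨ m ≤ i ∧ m ≤ i') ∧ (j = j' ∨ m ≤ j ∧ m ≤ j') := by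
        rcases lt_or_ge i m with hi | hi
        · exact ⟨i, n' - 1 - i, by omega⟩
        rcases lt_or_ge j m with hj | hj
        · exact ⟨n' - 1 - j, j, by omega⟩
        · exact ⟨m, n' - 1 - m, by omega⟩
      have same_type {i i' : ℕ} (hi : i = i' ∨ m ≤ i ∧ m ≤ i') :
          efType Lle k (Copies M i) = efType Lle k (Copies M i') := by
        obtain rfl | ⟨h, h'⟩ := hi
        exacts [rfl, hm M i i' h h']
      exact exists_reply_copies f hf (same_type hi) (same_type hj)
    refine ⟨efType_eq_iff.1 (hm M n n' (by omega) (by omega)), fun c => ?_, fun d => ?_⟩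
    · simpa using reply hn hn' c
    · obtain ⟨c, hc⟩ := reply hn' hn d
      exact ⟨c, hc.symm.mono (by simp)⟩

theorem EFType.exists_pow_succ_eq (k : ℕ) :
    ∃ m, ∀ x : EFType.{0, 0, 0} Lle k, x ^ (m + 1) = x ^ m := by
  obtain ⟨m, hm⟩ := exists_efType_copies_eq k
  refine ⟨m, ?_⟩
  rintro ⟨A⟩
  have := hm A (m + 1) m (by omega) le_rfl
  rwa [efType_copies, efType_copies] at this

end OrderedGraphs

-- For `e₀` with `e₀ * S * e₀` of minimal size, aperiodicity collapses `e * S * e` to the idempotent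
-- `e = e₀ ^ m`.
theorem exists_mul_mul_eq_self {S : Type*} [Monoid S] [Finite S] {m : ℕ}
    (hm : ∀ x : S, x ^ (m + 1) = x ^ m) : ∃ e : S, ∀ x, e * x * e = e := by
  let V (e : S) : Set S := Set.range fun s => e * s * e
  have V_subset {e y : S} (hy : y ∈ V e) : V y ⊆ V e := by
    obtain ⟨x, rfl⟩ := hy
    rintro _ ⟨s, rfl⟩
    exact ⟨x * e * s * e * x, by simp only [mul_assoc]⟩
  have pow_stable (x : S) (j : ℕ) : x ^ (m + j) = x ^ m := by
    induction j with
    | zero => rfl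
    | succ j ih => rw [← add_assoc, pow_succ, ih, ← pow_succ, hm]
  have pow_mem_V (x : S) : x ^ m ∈ V x :=
    ⟨x ^ m, by simp only [← pow_succ, ← pow_succ', hm]⟩
  obtain ⟨e₀, -, hmin⟩ := Set.exists_min_image Set.univ (fun e => (V e).ncard)
    Set.finite_univ ⟨1, trivial⟩
  have V_eq {y : S} (hy : V y ⊆ V e₀) : V y = V e₀ :=
    Set.eq_of_subset_of_ncard_le hy (hmin y trivial) (Set.toFinite _)
  have e_idem : e₀ ^ m * e₀ ^ m = e₀ ^ m := by rw [← pow_add, pow_stable]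
  have e_mem : e₀ ^ m ∈ V e₀ := pow_mem_V e₀
  refine ⟨e₀ ^ m, fun x => ?_⟩
  generalize e₀ ^ m = e at *
  have y_mem : e * x * e ∈ V e := ⟨x, rfl⟩
  have mul_right : e * x * e * e = e * x * e := by rw [mul_assoc, e_idem]
  generalize e * x * e = y at *
  have e_mem_V : e ∈ V (y ^ m) := by
    rw [V_eq ((V_subset (pow_mem_V y)).trans ((V_subset y_mem).trans (V_subset e_mem)))]
    exact e_mem
  obtain ⟨s, hs⟩ := e_mem_V
  calc y = y * e := mul_right.symm
    _ = y ^ (m + 1) * s * y ^ m := by rw [← hs]; simp only [pow_succ', mul_assoc]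
    _ = e := by rw [hm, ← hs]

/-! ### Intervals and markers -/

section Intervals

/-- The ordered graph induced on the integers in `[a, b)` by a graph on `ℕ`; the element `i` stands
for the vertex `a + i`. -/
def Interval (_G : SimpleGraph ℕ) (a b : ℕ) : Type := Fin (b - a)

namespace Interval

variable {G G' : SimpleGraph ℕ} {a' b' a b c : ℕ}

/-- The vertex of `G` that an element of an interval stands for. -/
def vertex (x : Interval G a b) : ℕ := a + Fin.val x

theorem vertex_mem (x : Interval G a b) : x.vertex ∈ Set.Ico a b := by
  have := Fin.isLt x
  simp only [vertex, Set.mem_Ico]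
  omega

instance : Lle.Structure (Interval G a b) :=
  mkStructure (fun x y => x.vertex ≤ y.vertex) fun x y => G.Adj x.vertex y.vertex

theorem le_iff (x y : Interval G a b) : Le x y ↔ x.vertex ≤ y.vertex := Iff.rfl

theorem adj_iff (x y : Interval G a b) : Adj x y ↔ G.Adj x.vertex y.vertex := Iff.rfl

/-- The bijection of an interval with the two intervals into which `c` cuts it. -/
def cutEquiv (hac : a ≤ c) (hcb : c ≤ b) : Interval G a c ⊕ Interval G c b ≃ Interval G a b :=
  finSumFinEquiv.trans (finCongr (by omega))

theorem vertex_cutEquiv_inl (hac : a ≤ c) (hcb : c ≤ b) (x : Interval G a c) :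
    (cutEquiv hac hcb (.inl x)).vertex = x.vertex := rfl

theorem vertex_cutEquiv_inr (hac : a ≤ c) (hcb : c ≤ b) (x : Interval G c b) :
    (cutEquiv hac hcb (.inr x)).vertex = x.vertex := by
  change a + (c - a + Fin.val x) = c + Fin.val x
  omega

/-- The bijection of two intervals of the same length. -/
def shiftEquiv (h : b - a = b' - a') : Interval G a b ≃ Interval G' a' b' := finCongr h

theorem vertex_shiftEquiv (h : b - a = b' - a') (x : Interval G a b) :
    a + (shiftEquiv h x : Interval G' a' b').vertex = a' + x.vertex :=
  Nat.add_left_comm _ _ _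

variable (G) in
/-- `Fin n` as an initial interval of `ℕ`. -/
def finEquiv (n : ℕ) : Fin n ≃ Interval G 0 n := Equiv.refl _

theorem vertex_finEquiv {n : ℕ} (x : Fin n) : (finEquiv G n x).vertex = x := zero_add _

end Interval

/-- No edge of `G` joins a vertex below `c` to a vertex from `c` on. -/
def IsCut (G : SimpleGraph ℕ) (c : ℕ) : Prop := ∀ x y, x < c → c ≤ y → ¬ G.Adj x y

/-- `G` has a copy of `W` restricted to `[0, w)` at `[a, a + w)`, with no edges leaving this
interval or passing over it. -/
structure IsMarker (G W : SimpleGraph ℕ) (w a : ℕ) : Prop where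
  isCut_left : IsCut G a
  isCut_right : IsCut G (a + w)
  adj_iff : ∀ i < w, ∀ j < w, G.Adj (a + i) (a + j) ↔ W.Adj i j

/-- The ordered graph `G` on `ℕ` occurs with positive probability: all its edges have lengths of
positive probability. -/
def IsAdmissible (p : ℕ → ℝ) (G : SimpleGraph ℕ) : Prop :=
  ∀ x y, x < y → G.Adj x y → 0 < p (y - x)

variable {p : ℕ → ℝ} {G G' : SimpleGraph ℕ} {a b c a' b' n : ℕ} (k : ℕ)

theorem efType_interval_of_isCut (hac : a ≤ c) (hcb : c ≤ b) (hc : IsCut G c) :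
    efType Lle k (Interval G a b) =
      efType Lle k (Interval G a c) * efType Lle k (Interval G c b) := by
  rw [← EFType.efType_sum]
  have lt (x : Interval G a c) (y : Interval G c b) : x.vertex < y.vertex :=
    x.vertex_mem.2.trans_le y.vertex_mem.1
  have not_adj (x : Interval G a c) (y : Interval G c b) : ¬ G.Adj x.vertex y.vertex :=
    hc _ _ x.vertex_mem.2 y.vertex_mem.1
  refine (efType_eq_of_equiv (isoOfEquiv (Interval.cutEquiv hac hcb) ?_ ?_) k).symm
  · rintro (x | x) (y | y) <;>
      simp [Interval.le_iff, le_sum_iff, Interval.vertex_cutEquiv_inl,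
        Interval.vertex_cutEquiv_inr, lt, (lt _ _).le]
  · rintro (x | x) (y | y) <;>
      simp [Interval.adj_iff, adj_sum_iff, Interval.vertex_cutEquiv_inl,
        Interval.vertex_cutEquiv_inr, not_adj, G.adj_comm x.vertex]

theorem efType_interval_congr (hab : b - a = n) (hab' : b' - a' = n)
    (h : ∀ i < n, ∀ j < n, G.Adj (a + i) (a + j) ↔ G'.Adj (a' + i) (a' + j)) :
    efType Lle k (Interval G a b) = efType Lle k (Interval G' a' b') := by
  refine efType_eq_of_equiv (isoOfEquiv (Interval.shiftEquiv (hab.trans hab'.symm))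
    (fun x y => ?_) fun x y => ?_) k
  · have hx := Interval.vertex_shiftEquiv (G' := G') (hab.trans hab'.symm) x
    have hy := Interval.vertex_shiftEquiv (G' := G') (hab.trans hab'.symm) y
    rw [Interval.le_iff, Interval.le_iff]
    omega
  · have lt_n (x : Interval G a b) : Fin.val x < n := (Fin.isLt x).trans_eq hab
    exact (h _ (lt_n x) _ (lt_n y)).symm

theorem efType_interval_of_isMarker {W : SimpleGraph ℕ} {w s t : ℕ} (h : IsMarker G W w a)
    (hs : s ≤ a) (ht : a + w ≤ t) :
    efType Lle k (Interval G s t) = efType Lle k (Interval G s a) *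
      efType Lle k (Interval W 0 w) * efType Lle k (Interval G (a + w) t) := by
  have marker : efType Lle k (Interval G a (a + w)) = efType Lle k (Interval W 0 w) :=
    efType_interval_congr k (Nat.add_sub_cancel_left a w) (Nat.sub_zero w)
      (by simpa using h.adj_iff)
  rw [efType_interval_of_isCut k hs (by omega : a ≤ t) h.isCut_left,
    efType_interval_of_isCut k (by omega : a ≤ a + w) ht h.isCut_right, mul_assoc, marker]

/-- The graph obtained by putting `G'` to the right of the restriction of `G` to `[0, n)`. -/
def concat (n : ℕ) (G G' : SimpleGraph ℕ) : SimpleGraph ℕ where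
  Adj x y := x < n ∧ y < n ∧ G.Adj x y ∨ n ≤ x ∧ n ≤ y ∧ G'.Adj (x - n) (y - n)
  symm.symm x y := by simp only [G.adj_comm x, G'.adj_comm (x - n)]; tauto
  loopless.irrefl x := by simp

theorem efType_concat (m : ℕ) :
    efType Lle k (Interval (concat n G G') 0 (n + m)) =
      efType Lle k (Interval G 0 n) * efType Lle k (Interval G' 0 m) := by
  rw [efType_interval_of_isCut k (Nat.zero_le n) (Nat.le_add_right n m)
    (by intro x y hx hy; simp only [concat]; omega)]
  congr 1
  · exact efType_interval_congr k rfl rfl (by simp only [concat]; grind)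
  · exact efType_interval_congr k (Nat.add_sub_cancel_left n m) rfl
      (by simp only [concat]; grind)

theorem IsAdmissible.concat (hG : IsAdmissible p G) (hG' : IsAdmissible p G') :
    IsAdmissible p (concat n G G') := by
  rintro x y hxy (⟨-, -, h⟩ | ⟨hx, hy, h⟩)
  · exact hG x y hxy h
  · have := hG' (x - n) (y - n) (by omega) h
    rwa [show y - n - (x - n) = y - x by omega] at this

variable (p) in
/-- The types of finite ordered graphs that occur with positive probability. -/
def admissibleTypes : Submonoid (EFType.{0, 0, 0} Lle k) where
  carrier := {τ | ∃ G n, IsAdmissible p G ∧ efType Lle k (Interval G 0 n) = τ}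
  one_mem' := by
    refine ⟨⊥, 0, fun _ _ _ h => h.elim, efType_eq_of_equiv (isoOfEquiv ?_ ?_ ?_) k⟩
    · exact (finZeroEquiv : Fin 0 ≃ Empty)
    · exact fun x => Fin.elim0 x
    · exact fun x => Fin.elim0 x
  mul_mem' := by
    rintro _ _ ⟨G, n, hG, rfl⟩ ⟨G', m, hG', rfl⟩
    exact ⟨_, _, hG.concat hG', efType_concat k m⟩

theorem IsAdmissible.efType_mem (hG : IsAdmissible p G) (a b : ℕ) :
    efType Lle k (Interval G a b) ∈ admissibleTypes p k := by
  refine ⟨G.comap (a + ·), b - a, fun x y hxy h => ?_, efType_interval_congr k rfl rfl (by simp)⟩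
  have := hG _ _ (Nat.add_lt_add_left hxy a) h
  rwa [Nat.add_sub_add_left] at this

/-- `W` on `[0, w)` absorbs: its type `e` satisfies `e * τ * e = e` for all types `τ` that occur. -/
def IsAbsorbing (p : ℕ → ℝ) (k : ℕ) (W : SimpleGraph ℕ) (w : ℕ) : Prop :=
  ∀ τ ∈ admissibleTypes p k, efType Lle k (Interval W 0 w) * τ * efType Lle k (Interval W 0 w) =
    efType Lle k (Interval W 0 w)

variable (p) in
theorem exists_isAbsorbing : ∃ W w, IsAdmissible p W ∧ IsAbsorbing p k W w := by
  obtain ⟨m, hm⟩ := EFType.exists_pow_succ_eq k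
  obtain ⟨⟨_, W, w, hW, rfl⟩, habs⟩ :=
    exists_mul_mul_eq_self (S := admissibleTypes p k) (m := m) fun x => Subtype.ext (hm x)
  exact ⟨W, w, hW, fun τ hτ => congrArg Subtype.val (habs ⟨τ, hτ⟩)⟩

variable {k}

theorem IsAbsorbing.efType_eq_mul {W : SimpleGraph ℕ} {w T u : ℕ} (hW : IsAbsorbing p k W w)
    (hG : IsAdmissible p G) (ha : IsMarker G W w a) (hb : IsMarker G W w b) (haT : a + w ≤ T)
    (hTu : T ≤ u) (hub : u ≤ b) (hbn : b + w ≤ n) :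
    efType Lle k (Interval G 0 n) =
      efType Lle k (Interval G 0 T) * efType Lle k (Interval G u n) := by
  have between := hW _ (hG.efType_mem k (a + w) b)
  have cut_out := hW _ (mul_mem (hG.efType_mem k (a + w) T) (hG.efType_mem k u b))
  rw [efType_interval_of_isMarker k ha (Nat.zero_le _) (by omega : a + w ≤ n),
    efType_interval_of_isMarker k hb (by omega : a + w ≤ b) hbn,
    efType_interval_of_isMarker k ha (Nat.zero_le _) haT,
    efType_interval_of_isMarker k hb hub hbn]
  generalize efType Lle k (Interval W 0 w) = e at *
  generalize efType Lle k (Interval G 0 a) = x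
  generalize efType Lle k (Interval G (b + w) n) = y
  calc x * e * (efType Lle k (Interval G (a + w) b) * e * y)
      = x * (e * efType Lle k (Interval G (a + w) b) * e) * y := by simp only [mul_assoc]
    _ = x * (e * (efType Lle k (Interval G (a + w) T) * efType Lle k (Interval G u b)) * e) * y :=
      by rw [between, cut_out]
    _ = _ := by simp only [mul_assoc]

end Intervals

/-! ### Product measures -/

section ProductMeasure

open MeasureTheory ProbabilityTheory

theorem measureReal_iInter_compl_le_pow {Ω ι : Type*} [MeasurableSpace Ω] [Fintype ι]
    {μ : Measure Ω} {B : ι → Set Ω} (hB : ∀ i, MeasurableSet (B i)) (hindep : iIndepSet B μ)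
    {δ : ℝ} (hδ : ∀ i, δ ≤ μ.real (B i)) :
    μ.real (⋂ i, (B i)ᶜ) ≤ (1 - δ) ^ Fintype.card ι := by
  have := hindep.isProbabilityMeasure
  have hcompl : ∀ i, MeasurableSet[MeasurableSpace.generateFrom {B i}] (B i)ᶜ := fun i =>
    (MeasurableSpace.measurableSet_generateFrom (Set.mem_singleton (B i))).compl
  calc μ.real (⋂ i, (B i)ᶜ) = ∏ i, μ.real (B i)ᶜ := by
        simp only [measureReal_def, iIndep.meas_iInter hindep hcompl, ENNReal.toReal_prod]
    _ ≤ ∏ _i : ι, (1 - δ) := Finset.prod_le_prod (fun _ _ => measureReal_nonneg) fun i _ => by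
        rw [probReal_compl_eq_one_sub (hB i)]
        linarith [hδ i]
    _ = (1 - δ) ^ Fintype.card ι := by simp

variable {ι : Type*} [Fintype ι] {α : ι → Type*} [∀ i, MeasurableSpace (α i)]
  (μ : ∀ i, Measure (α i)) [∀ i, IsProbabilityMeasure (μ i)]

theorem measurePi_map_comp_injective {κ : Type*} [Fintype κ] {f : κ → ι} (hf : f.Injective) :
    (Measure.pi μ).map (fun ω k => ω (f k)) = Measure.pi fun k => μ (f k) := by
  have hindep : iIndepFun (fun i (ω : ∀ i, α i) => ω i) (Measure.pi μ) :=
    iIndepFun_pi (X := fun _ x => x) fun _ => aemeasurable_id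
  rw [(hindep.precomp hf).map_fun_eq_pi_map fun _ => (measurable_pi_apply _).aemeasurable]
  exact congrArg Measure.pi <| funext fun k => (measurePreserving_eval μ (f k)).map_eq

theorem iIndepSet_measurePi_of_disjoint {κ : Type*} {S : κ → Finset ι}
    (hS : Pairwise fun j j' => Disjoint (S j) (S j')) {B : κ → ∀ i, Set (α i)}
    (hB : ∀ j i, MeasurableSet (B j i)) :
    iIndepSet (fun j => (S j : Set ι).pi (B j)) (Measure.pi μ) := by
  classical
  have hmeas (j : κ) : MeasurableSet ((S j : Set ι).pi (B j)) :=
    .pi (S j).countable_toSet fun i _ => hB j i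
  refine (iIndepSet_iff_meas_biInter hmeas).2 fun t => ?_
  have hbox : ⋂ j ∈ t, (S j : Set ι).pi (B j) =
      Set.univ.pi fun i => ⋂ j ∈ t, if i ∈ S j then B j i else Set.univ := by
    ext ω
    simp only [Set.mem_iInter, Set.mem_pi, Set.mem_univ, true_implies, Finset.mem_coe]
    refine ⟨fun h i j hj => ?_, fun h j hj i hi => by simpa [hi] using h i j hj⟩
    split_ifs with hi
    exacts [h j hj i hi, trivial]
  have hcoord (i : ι) : μ i (⋂ j ∈ t, if i ∈ S j then B j i else Set.univ) =
      ∏ j ∈ t, if i ∈ S j then μ i (B j i) else 1 := by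
    by_cases hi : ∃ j ∈ t, i ∈ S j
    · obtain ⟨j, hj, hij⟩ := hi
      have other : ∀ j' ∈ t, j' ≠ j → i ∉ S j' := fun j' _ hne hij' =>
        Finset.disjoint_left.1 (hS hne) hij' hij
      rw [Finset.prod_eq_single_of_mem j hj fun j' hj' hne => if_neg (other j' hj' hne), if_pos hij]
      congr 1
      refine Set.Subset.antisymm (fun x hx => ?_) fun x hx => Set.mem_iInter₂.2 fun j' hj' => ?_
      · simpa [hij] using Set.mem_iInter₂.1 hx j hj
      · rcases eq_or_ne j' j with rfl | hne
        · simpa [hij] using hx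
        · simp [other j' hj' hne]
    · push Not at hi
      rw [Finset.prod_eq_one fun j hj => if_neg (hi j hj),
        Set.iInter₂_congr fun j hj => if_neg (hi j hj)]
      simp
  simp only [hbox, Measure.pi_pi, hcoord, Measure.pi_pi_finset]
  rw [Finset.prod_comm]
  simp

end ProductMeasure

/-! ### The random graph as a product measure -/

section SampleLaw

open MeasureTheory ProbabilityTheory

/-- The distance between the two end points of a potential edge. -/
def edgeLength {n : ℕ} (e : EdgeIdx n) : ℕ := e.1.2.val - e.1.1.val

/-- The probability that an edge which is present with probability `q` is in the state `b`. -/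
def stateProb (q : unitInterval) (b : Bool) : ℝ := if b then q else 1 - q

theorem stateProb_nonneg (q : unitInterval) (b : Bool) : 0 ≤ stateProb q b := by
  cases b <;> simp [stateProb, q.2.1, q.2.2]

theorem stateProb_le_one (q : unitInterval) (b : Bool) : stateProb q b ≤ 1 := by
  cases b <;> simp [stateProb, q.2.1, q.2.2]

theorem bernoulliMeasure_real_singleton (q : unitInterval) (b : Bool) :
    (bernoulliMeasure true false q).real {b} = stateProb q b := by
  cases b <;> simp [stateProb]

variable (q : ℕ → unitInterval) {n : ℕ}

/-- The law of the random graph `G(n, q)` as a product measure. -/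
noncomputable def sampleLaw (n : ℕ) : Measure (Sample n) :=
  Measure.pi fun e => bernoulliMeasure true false (q (edgeLength e))

instance : IsProbabilityMeasure (sampleLaw q n) := by
  unfold sampleLaw
  infer_instance

theorem sampleLaw_real_pi_singleton (S : Finset (EdgeIdx n)) (τ : Sample n) :
    (sampleLaw q n).real ((S : Set (EdgeIdx n)).pi fun e => {τ e}) =
      ∏ e ∈ S, stateProb (q (edgeLength e)) (τ e) := by
  simp only [sampleLaw, measureReal_def, Measure.pi_pi_finset, ENNReal.toReal_prod,
    ← bernoulliMeasure_real_singleton]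

theorem sampleWeight_eq_sampleLaw_real (ω : Sample n) :
    sampleWeight (fun i => q i) ω = (sampleLaw q n).real {ω} := by
  rw [← Set.univ_pi_singleton, ← Finset.coe_univ, sampleLaw_real_pi_singleton]
  rfl

theorem Pr_eq_sampleLaw_real (P : Sample n → Prop) :
    Pr (fun i => q i) n P = (sampleLaw q n).real {ω | P ω} := by
  classical
  rw [← Finset.coe_filter_univ, ← sum_measureReal_singleton, Finset.sum_filter]
  exact Finset.sum_congr rfl fun ω _ => by rw [sampleWeight_eq_sampleLaw_real]

theorem ae_sampleLaw_pos_of_present :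
    ∀ᵐ ω ∂sampleLaw q n, ∀ e, ω e = true → 0 < (q (edgeLength e) : ℝ) := by
  refine ae_all_iff.2 fun e =>
    (Measure.quasiMeasurePreserving_eval
      (fun e : EdgeIdx n => bernoulliMeasure true false (q (edgeLength e))) e).ae
      (p := fun b => b = true → 0 < (q (edgeLength e) : ℝ)) ?_
  rcases eq_or_ne (q (edgeLength e)) 0 with h | h
  · simp [h]
  · exact .of_forall fun _ _ => unitInterval.pos_iff_ne_zero.2 h

end SampleLaw

/-! ### Samples as graphs on the natural numbers -/

section SampleGraph

variable {n : ℕ}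

/-- An outcome of the random graph on `[n]` as a graph on `ℕ`, without edges outside `[0, n)`. -/
def sampleGraph (ω : Sample n) : SimpleGraph ℕ where
  Adj := adjVal ω
  symm := ⟨fun _ _ ⟨e, he, h⟩ => ⟨e, he, h.symm⟩⟩
  loopless := ⟨fun _ ⟨e, _, h⟩ => by have := Fin.lt_def.1 e.2; omega⟩

theorem sampleGraph_adj_iff_of_lt (ω : Sample n) {x y : ℕ} (hxy : x < y) :
    (sampleGraph ω).Adj x y ↔ ∃ e : EdgeIdx n, e.1.1.val = x ∧ e.1.2.val = y ∧ ω e = true := by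
  refine exists_congr fun e => ?_
  have := Fin.lt_def.1 e.2
  have hne : ¬ (e.1.1.val = y ∧ e.1.2.val = x) := by omega
  tauto

theorem satLe_iff (ω : Sample n) (ψ : Lle.Sentence) :
    SatLe ω ψ ↔ EFType.Satisfies ψ (efType Lle _ (Interval (sampleGraph ω) 0 n)) := by
  let := leStructure ω
  refine Language.StrongHomClass.realize_sentence
    (isoOfEquiv (Interval.finEquiv (sampleGraph ω) n) (fun x y => ?_) fun x y => ?_) ψ
  · rw [Interval.le_iff, Interval.vertex_finEquiv, Interval.vertex_finEquiv]
    rfl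
  · rw [Interval.adj_iff, Interval.vertex_finEquiv, Interval.vertex_finEquiv]
    rfl

theorem edgeIdx_ext {e e' : EdgeIdx n} (h₁ : e.1.1.val = e'.1.1.val)
    (h₂ : e.1.2.val = e'.1.2.val) : e = e' :=
  Subtype.ext (Prod.ext (Fin.ext h₁) (Fin.ext h₂))

/-- The edge of a graph on `[n]` obtained by translating an edge of a graph on `[m]` by `s`. -/
def shiftEdge {m : ℕ} (s : ℕ) (h : s + m ≤ n) (e : EdgeIdx m) : EdgeIdx n :=
  ⟨(⟨s + e.1.1, by omega⟩, ⟨s + e.1.2, by omega⟩), Nat.add_lt_add_left e.2 s⟩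

theorem shiftEdge_injective {m s : ℕ} (h : s + m ≤ n) : (shiftEdge s h).Injective := by
  intro e e' hee'
  simp only [shiftEdge, Subtype.mk.injEq, Prod.mk.injEq, Fin.mk.injEq] at hee'
  exact edgeIdx_ext (by omega) (by omega)

theorem edgeLength_shiftEdge {m s : ℕ} (h : s + m ≤ n) (e : EdgeIdx m) :
    edgeLength (shiftEdge s h e) = edgeLength e :=
  Nat.add_sub_add_left _ _ _

theorem sampleGraph_adj_edge (ω : Sample n) (e : EdgeIdx n) :
    (sampleGraph ω).Adj e.1.1 e.1.2 ↔ ω e = true := by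
  refine (sampleGraph_adj_iff_of_lt ω e.2).trans ⟨?_, fun h => ⟨e, rfl, rfl, h⟩⟩
  rintro ⟨e', h₁, h₂, h⟩
  rwa [← edgeIdx_ext h₁ h₂]

theorem forall_adj_add_iff_of_forall_edge {G H : SimpleGraph ℕ} {a : ℕ}
    (h : ∀ e : EdgeIdx n, G.Adj (a + e.1.1) (a + e.1.2) ↔ H.Adj e.1.1 e.1.2) :
    ∀ i < n, ∀ j < n, G.Adj (a + i) (a + j) ↔ H.Adj i j := by
  intro i hi j hj
  rcases lt_trichotomy i j with hij | rfl | hji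
  · exact h ⟨(⟨i, hi⟩, ⟨j, hj⟩), hij⟩
  · simp
  · rw [SimpleGraph.adj_comm, SimpleGraph.adj_comm H]
    exact h ⟨(⟨j, hj⟩, ⟨i, hi⟩), hji⟩

theorem isAdmissible_sampleGraph {p : ℕ → ℝ} {ω : Sample n}
    (h : ∀ e, ω e = true → 0 < p (edgeLength e)) : IsAdmissible p (sampleGraph ω) := by
  intro x y hxy hadj
  obtain ⟨e, rfl, rfl, he⟩ := (sampleGraph_adj_iff_of_lt ω hxy).1 hadj
  exact h e he

end SampleGraph

/-! ### Probability of markers -/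

section Estimates

theorem exists_prod_Ioc_ge {f : ℕ → ℝ} {c η : ℝ} (hc : 0 < c)
    (hf : ∀ n, c ≤ ∏ i ∈ Finset.Icc 1 n, f i) (hη : 0 < η) :
    ∃ ℓ, ∀ n, 1 - η ≤ ∏ i ∈ Finset.Ioc ℓ n, f i := by
  set F : ℕ → ℝ := fun n => ∏ i ∈ Finset.Icc 1 n, f i
  have hbdd : BddBelow (Set.range F) := ⟨c, Set.forall_mem_range.2 hf⟩
  obtain ⟨_, ⟨ℓ, rfl⟩, hℓ⟩ := exists_lt_of_csInf_lt (Set.range_nonempty F)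
    (lt_add_of_pos_right (sInf (Set.range F)) (mul_pos hc hη))
  refine ⟨ℓ, fun n => ?_⟩
  rcases le_or_gt ℓ n with hn | hn
  · have hsplit : F ℓ * ∏ i ∈ Finset.Ioc ℓ n, f i = F n :=
      Finset.prod_Ioc_consecutive f (Nat.zero_le ℓ) hn
    have hFn : sInf (Set.range F) ≤ F n := csInf_le hbdd ⟨n, rfl⟩
    have hcη : c * η ≤ F ℓ * η := mul_le_mul_of_nonneg_right (hf ℓ) hη.le
    refine le_of_mul_le_mul_left ?_ (hc.trans_le (hf ℓ))
    linarith
  · rw [Finset.Ioc_eq_empty_of_le hn.le, Finset.prod_empty]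
    linarith

theorem mul_prod_le_prod_of_subset_union {ι : Type*} [DecidableEq ι] {S A B : Finset ι} {f : ι → ℝ}
    (hS : S ⊆ A ∪ B) (h0 : ∀ i, 0 ≤ f i) (h1 : ∀ i, f i ≤ 1) :
    (∏ i ∈ A, f i) * ∏ i ∈ B, f i ≤ ∏ i ∈ S, f i := by
  refine le_trans ?_ <|
    Finset.prod_le_prod_of_subset_of_le_one hS (fun i _ => h0 i) fun i _ _ => h1 i
  rw [← Finset.prod_union_inter]
  exact mul_le_of_le_one_right (Finset.prod_nonneg fun i _ => h0 i)
    (Finset.prod_le_one (fun i _ => h0 i) fun i _ => h1 i)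

/-- The potential edges that pass over the gap between `c - 1` and `c`. -/
def crossing (n c : ℕ) : Finset (EdgeIdx n) := {e | e.1.1.val < c ∧ c ≤ e.1.2.val}

variable {q : ℕ → unitInterval} {n : ℕ}

-- There are at most `i` edges of length `i` that cross `c`.
theorem prod_pow_le_prod_of_subset_crossing {S : Finset (EdgeIdx n)} {c : ℕ} (hS : S ⊆ crossing n c)
    {I : Finset ℕ} (hI : ∀ e ∈ S, edgeLength e ∈ I) :
    ∏ i ∈ I, (1 - q i : ℝ) ^ i ≤ ∏ e ∈ S, (1 - q (edgeLength e) : ℝ) := by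
  classical
  have hmem : ∀ e ∈ S, e.1.1.val < c ∧ c ≤ e.1.2.val := fun e he => by
    simpa [crossing] using hS he
  let position : EdgeIdx n → Σ _ : ℕ, ℕ := fun e => ⟨edgeLength e, e.1.2 - c⟩
  have hinj : Set.InjOn position S := by
    intro e he e' he' h
    have := hmem e he
    have := hmem e' he'
    simp only [position, edgeLength, Sigma.mk.injEq, heq_eq_eq] at h
    exact edgeIdx_ext (by omega) (by omega)
  have hsub : S.image position ⊆ I.sigma fun i => Finset.range i := by
    refine Finset.image_subset_iff.2 fun e he => Finset.mem_sigma.2 ⟨hI e he, ?_⟩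
    have := hmem e he
    simp only [position, edgeLength, Finset.mem_range]
    omega
  calc ∏ i ∈ I, (1 - q i : ℝ) ^ i
      = ∏ x ∈ I.sigma fun i => Finset.range i, (1 - q x.1 : ℝ) := by simp [Finset.prod_sigma]
    _ ≤ ∏ x ∈ S.image position, (1 - q x.1 : ℝ) :=
        Finset.prod_le_prod_of_subset_of_le_one hsub
          (fun _ _ => unitInterval.one_minus_nonneg _) fun _ _ _ => unitInterval.one_minus_le_one _
    _ = ∏ e ∈ S, (1 - q (edgeLength e) : ℝ) := Finset.prod_image hinj

open MeasureTheory

/-- The event that some edge longer than `ℓ` crosses `c`. -/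
def longEdgeEvent (n ℓ c : ℕ) : Set (Sample n) :=
  {ω | ∃ e ∈ crossing n c, ℓ < edgeLength e ∧ ω e = true}

theorem sampleLaw_real_longEdgeEvent_le {η : ℝ} {ℓ : ℕ}
    (hℓ : ∀ n, 1 - η ≤ ∏ i ∈ Finset.Ioc ℓ n, (1 - q i : ℝ) ^ i) (n c : ℕ) :
    (sampleLaw q n).real (longEdgeEvent n ℓ c) ≤ η := by
  set S := (crossing n c).filter fun e => ℓ < edgeLength e with hS
  have hcompl : longEdgeEvent n ℓ c = ((S : Set (EdgeIdx n)).pi fun _ => {false})ᶜ := by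
    ext ω
    simp [hS, longEdgeEvent]
  have hlength : ∀ e ∈ S, edgeLength e ∈ Finset.Ioc ℓ n := fun e he =>
    Finset.mem_Ioc.2 ⟨(Finset.mem_filter.1 he).2, (Nat.sub_le _ _).trans e.1.2.isLt.le⟩
  have habsent := sampleLaw_real_pi_singleton q S fun _ => false
  have hprod := prod_pow_le_prod_of_subset_crossing (q := q) (Finset.filter_subset _ _) hlength
  simp only [stateProb, Bool.false_eq_true, if_false] at habsent
  rw [hcompl, probReal_compl_eq_one_sub (Set.toFinite _).measurableSet, habsent]
  linarith [hℓ n]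

/-- The probability that the random graph on `[w]` is `W` restricted to `[0, w)`. -/
noncomputable def graphProb (q : ℕ → unitInterval) (W : SimpleGraph ℕ) (w : ℕ) : ℝ :=
  open scoped Classical in
  ∏ e : EdgeIdx w, stateProb (q (edgeLength e)) (decide (W.Adj e.1.1 e.1.2))

theorem graphProb_pos (hq : ∀ i, (q i : ℝ) < 1) {W : SimpleGraph ℕ}
    (hW : IsAdmissible (fun i => q i) W) (w : ℕ) : 0 < graphProb q W w := by
  refine Finset.prod_pos fun e _ => ?_
  by_cases h : W.Adj e.1.1 e.1.2
  · simpa [stateProb, h] using! hW _ _ e.2 h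
  · simpa [stateProb, h] using hq (edgeLength e)

open scoped Classical in
/-- The state of the edge `e` when `[a, a + w)` is an isolated copy of `W` restricted to
`[0, w)`. -/
noncomputable def markerState (W : SimpleGraph ℕ) (w a : ℕ) (e : EdgeIdx n) : Bool :=
  decide (a ≤ e.1.1.val ∧ e.1.2.val < a + w ∧ W.Adj (e.1.1 - a) (e.1.2 - a))

/-- The potential edges inside the interval `[a, a + w)`, leaving it or passing over it. -/
def markerEdges (n w a : ℕ) : Finset (EdgeIdx n) := {e | a ≤ e.1.2.val ∧ e.1.1.val < a + w}

/-- The edges of `markerEdges` whose end points are at distance at most `ℓ` from the interval. -/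
def markerCell (n w a ℓ : ℕ) : Finset (EdgeIdx n) :=
  {e ∈ markerEdges n w a | a ≤ e.1.1.val + ℓ ∧ e.1.2.val < a + w + ℓ}

/-- The event that the edges of `markerCell` are in the states required by a marker. -/
def markerCellEvent (n : ℕ) (W : SimpleGraph ℕ) (w a ℓ : ℕ) : Set (Sample n) :=
  (markerCell n w a ℓ : Set (EdgeIdx n)).pi fun e => {markerState W w a e}

variable {W : SimpleGraph ℕ} {w a : ℕ}

theorem markerState_of_mem_crossing {c : ℕ} (hc : c = a ∨ c = a + w) {e : EdgeIdx n}
    (he : e ∈ crossing n c) : markerState W w a e = false := by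
  simp only [crossing, Finset.mem_filter_univ] at he
  simp only [markerState, decide_eq_false_iff_not]
  omega

open scoped Classical in
theorem markerState_shiftEdge (hn : a + w ≤ n) (e : EdgeIdx w) :
    markerState W w a (shiftEdge a hn e) = decide (W.Adj e.1.1 e.1.2) := by
  simp [markerState, shiftEdge]

theorem crossing_subset_markerEdges {c : ℕ} (hc : c = a ∨ c = a + w) :
    crossing n c ⊆ markerEdges n w a := by
  intro e he
  simp only [crossing, markerEdges, Finset.mem_filter_univ] at he ⊢
  omega

theorem shiftEdge_mem_markerEdges (hn : a + w ≤ n) (e : EdgeIdx w) :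
    shiftEdge a hn e ∈ markerEdges n w a := by
  simp only [markerEdges, shiftEdge, Finset.mem_filter_univ]
  omega

theorem markerEdges_subset (hn : a + w ≤ n) :
    markerEdges n w a ⊆
      Finset.univ.image (shiftEdge a hn) ∪ crossing n a ∪ crossing n (a + w) := by
  intro e he
  have := Fin.lt_def.1 e.2
  simp only [markerEdges, crossing, Finset.mem_union, Finset.mem_filter_univ, Finset.mem_image,
    Finset.mem_univ, true_and] at he ⊢
  by_cases hin : a ≤ e.1.1.val ∧ e.1.2.val < a + w
  · refine .inl (.inl ⟨⟨(⟨e.1.1 - a, by omega⟩, ⟨e.1.2 - a, by omega⟩), ?_⟩, ?_⟩)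
    · exact Fin.lt_def.2 (by simp only; omega)
    · exact edgeIdx_ext (by simp only [shiftEdge]; omega) (by simp only [shiftEdge]; omega)
  · omega

theorem isMarker_sampleGraph (hn : a + w ≤ n) {ω : Sample n}
    (hω : ∀ e ∈ markerEdges n w a, ω e = markerState W w a e) :
    IsMarker (sampleGraph ω) W w a := by
  classical
  have isCut (c : ℕ) (hc : c = a ∨ c = a + w) : IsCut (sampleGraph ω) c := by
    intro x y hx hy hadj
    obtain ⟨e, rfl, rfl, he⟩ := (sampleGraph_adj_iff_of_lt ω (hx.trans_le hy)).1 hadj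
    have hcross : e ∈ crossing n c := by simp [crossing, hx, hy]
    rw [hω e (crossing_subset_markerEdges hc hcross), markerState_of_mem_crossing hc hcross] at he
    exact Bool.false_ne_true he
  refine ⟨isCut a (.inl rfl), isCut (a + w) (.inr rfl), forall_adj_add_iff_of_forall_edge
    fun e => (sampleGraph_adj_edge ω (shiftEdge a hn e)).trans ?_⟩
  rw [hω _ (shiftEdge_mem_markerEdges hn e), markerState_shiftEdge, decide_eq_true_iff]

theorem le_prod_stateProb_crossing {c : ℝ} {b : ℕ}
    (hprod : ∀ n, c ≤ ∏ i ∈ Finset.Icc 1 n, (1 - q i : ℝ) ^ i) (hb : b = a ∨ b = a + w) :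
    c ≤ ∏ e ∈ crossing n b, stateProb (q (edgeLength e)) (markerState W w a e) := by
  have hlength (e : EdgeIdx n) : edgeLength e ∈ Finset.Icc 1 n :=
    Finset.mem_Icc.2 ⟨Nat.sub_pos_of_lt e.2, (Nat.sub_le _ _).trans e.1.2.isLt.le⟩
  calc c ≤ ∏ i ∈ Finset.Icc 1 n, (1 - q i : ℝ) ^ i := hprod n
    _ ≤ ∏ e ∈ crossing n b, (1 - q (edgeLength e) : ℝ) :=
        prod_pow_le_prod_of_subset_crossing subset_rfl fun e _ => hlength e
    _ = _ := Finset.prod_congr rfl fun e he => by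
        simp [markerState_of_mem_crossing hb he, stateProb]

theorem le_prod_stateProb_markerEdges {c : ℝ} (hc : 0 < c)
    (hprod : ∀ n, c ≤ ∏ i ∈ Finset.Icc 1 n, (1 - q i : ℝ) ^ i) (hn : a + w ≤ n) :
    graphProb q W w * c * c ≤
      ∏ e ∈ markerEdges n w a, stateProb (q (edgeLength e)) (markerState W w a e) := by
  classical
  set f : EdgeIdx n → ℝ := fun e => stateProb (q (edgeLength e)) (markerState W w a e)
  have hf0 (e : EdgeIdx n) : 0 ≤ f e := stateProb_nonneg _ _
  have hf1 (e : EdgeIdx n) : f e ≤ 1 := stateProb_le_one _ _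
  set inside := Finset.univ.image (shiftEdge a hn)
  have hinside : graphProb q W w = ∏ e ∈ inside, f e := by
    simp only [inside, f, graphProb, Finset.prod_image (shiftEdge_injective hn).injOn,
      edgeLength_shiftEdge, markerState_shiftEdge]
  have hleft : c ≤ ∏ e ∈ crossing n a, f e := le_prod_stateProb_crossing hprod (.inl rfl)
  have hright : c ≤ ∏ e ∈ crossing n (a + w), f e := le_prod_stateProb_crossing hprod (.inr rfl)
  calc graphProb q W w * c * c
      ≤ (∏ e ∈ inside, f e) * (∏ e ∈ crossing n a, f e) * ∏ e ∈ crossing n (a + w), f e := by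
        rw [hinside]
        have := Finset.prod_nonneg fun e (_ : e ∈ inside) => hf0 e
        have := hc.le.trans hleft
        gcongr
    _ ≤ (∏ e ∈ inside ∪ crossing n a, f e) * ∏ e ∈ crossing n (a + w), f e := by
        have := hc.le.trans hright
        gcongr
        exact mul_prod_le_prod_of_subset_union subset_rfl hf0 hf1
    _ ≤ ∏ e ∈ markerEdges n w a, f e :=
        mul_prod_le_prod_of_subset_union (markerEdges_subset hn) hf0 hf1

theorem isMarker_sampleGraph_of_mem_markerCellEvent (hn : a + w ≤ n) {ω : Sample n} {ℓ : ℕ}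
    (hcell : ω ∈ markerCellEvent n W w a ℓ)
    (hlong : ∀ b, b = a ∨ b = a + w → ω ∉ longEdgeEvent n ℓ b) :
    IsMarker (sampleGraph ω) W w a := by
  refine isMarker_sampleGraph hn fun e he => ?_
  by_cases hmem : e ∈ markerCell n w a ℓ
  · exact hcell e hmem
  obtain ⟨b, hb, hcross, hlen⟩ :
      ∃ b, (b = a ∨ b = a + w) ∧ e ∈ crossing n b ∧ ℓ < edgeLength e := by
    simp only [markerCell, markerEdges, Finset.mem_filter, Finset.mem_univ, true_and, crossing,
      edgeLength] at he hmem ⊢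
    by_cases hleft : a ≤ e.1.1.val + ℓ
    · exact ⟨a + w, .inr rfl, by omega, by omega⟩
    · exact ⟨a, .inl rfl, by omega, by omega⟩
  rw [markerState_of_mem_crossing hb hcross, ← Bool.not_eq_true]
  exact fun hpresent => hlong b hb ⟨e, hcross, hlen, hpresent⟩

/-- The left end of the `j`-th of the disjoint blocks of length `2 * ℓ + w` that start at `s`, each
with room for an interval of length `w` with a margin `ℓ` on both sides. -/
def blockStart (s w ℓ j : ℕ) : ℕ := s + j * (2 * ℓ + w) + ℓ

theorem blockStart_add_le (s w ℓ : ℕ) {j J : ℕ} (hj : j < J) :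
    blockStart s w ℓ j + w + ℓ ≤ s + J * (2 * ℓ + w) := by
  have := Nat.mul_le_mul_right (2 * ℓ + w) hj
  rw [Nat.succ_mul] at this
  unfold blockStart
  omega

theorem disjoint_markerCell_blockStart (n s w ℓ : ℕ) {i j : ℕ} (hij : i < j) :
    Disjoint (markerCell n w (blockStart s w ℓ i) ℓ) (markerCell n w (blockStart s w ℓ j) ℓ) := by
  refine Finset.disjoint_left.2 fun e he he' => ?_
  have := Fin.lt_def.1 e.2
  have := blockStart_add_le s w ℓ hij
  have hj : blockStart s w ℓ j = s + j * (2 * ℓ + w) + ℓ := rfl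
  simp only [markerCell, Finset.mem_filter] at he he'
  omega

theorem le_sampleLaw_real_markerCellEvent {c : ℝ} (hc : 0 < c)
    (hprod : ∀ n, c ≤ ∏ i ∈ Finset.Icc 1 n, (1 - q i : ℝ) ^ i) (hn : a + w ≤ n) (ℓ : ℕ) :
    graphProb q W w * c * c ≤ (sampleLaw q n).real (markerCellEvent n W w a ℓ) := by
  rw [markerCellEvent, sampleLaw_real_pi_singleton]
  exact (le_prod_stateProb_markerEdges hc hprod hn).trans
    (Finset.prod_le_prod_of_subset_of_le_one (Finset.filter_subset _ _)
      (fun _ _ => stateProb_nonneg _ _) fun _ _ _ => stateProb_le_one _ _)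

theorem iIndepSet_markerCellEvent_blockStart (n s ℓ J : ℕ) :
    ProbabilityTheory.iIndepSet
      (fun j : Fin J => markerCellEvent n W w (blockStart s w ℓ j) ℓ) (sampleLaw q n) := by
  refine iIndepSet_measurePi_of_disjoint _ (fun i j hij => ?_) fun _ _ => measurableSet_singleton _
  rcases Nat.lt_or_gt_of_ne (Fin.val_ne_of_ne hij) with h | h
  exacts [disjoint_markerCell_blockStart n s w ℓ h, (disjoint_markerCell_blockStart n s w ℓ h).symm]

theorem sampleLaw_real_iInter_compl_markerCellEvent_le {c : ℝ} (hc : 0 < c)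
    (hprod : ∀ n, c ≤ ∏ i ∈ Finset.Icc 1 n, (1 - q i : ℝ) ^ i) {s ℓ J : ℕ}
    (hn : s + J * (2 * ℓ + w) ≤ n) :
    (sampleLaw q n).real (⋂ j : Fin J, (markerCellEvent n W w (blockStart s w ℓ j) ℓ)ᶜ) ≤
      (1 - graphProb q W w * c * c) ^ J := by
  refine (measureReal_iInter_compl_le_pow (fun _ => (Set.toFinite _).measurableSet)
    (iIndepSet_markerCellEvent_blockStart n s ℓ J)
    fun j => le_sampleLaw_real_markerCellEvent hc hprod ?_ ℓ).trans_eq (by rw [Fintype.card_fin])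
  have := blockStart_add_le s w ℓ j.isLt
  omega

/-- `G` has a marker inside the interval `[s, t)`. -/
def HasMarker (G W : SimpleGraph ℕ) (w s t : ℕ) : Prop := ∃ a, s ≤ a ∧ a + w ≤ t ∧ IsMarker G W w a

theorem setOf_not_hasMarker_subset {s ℓ J : ℕ} (hn : s + J * (2 * ℓ + w) ≤ n) :
    {ω : Sample n | ¬ HasMarker (sampleGraph ω) W w s (s + J * (2 * ℓ + w))} ⊆
      (⋂ j : Fin J, (markerCellEvent n W w (blockStart s w ℓ j) ℓ)ᶜ) ∪
        ⋃ j : Fin J, longEdgeEvent n ℓ (blockStart s w ℓ j) ∪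
          longEdgeEvent n ℓ (blockStart s w ℓ j + w) := by
  intro ω hω
  by_contra hcon
  simp only [Set.mem_union, Set.mem_iInter, Set.mem_iUnion, Set.mem_compl_iff, not_or, not_forall,
    not_exists, not_not] at hcon
  obtain ⟨⟨j, hcell⟩, hlong⟩ := hcon
  have hroom := blockStart_add_le s w ℓ j.isLt
  have hstart : s ≤ blockStart s w ℓ j := by
    unfold blockStart
    omega
  refine hω ⟨_, hstart, by omega,
    isMarker_sampleGraph_of_mem_markerCellEvent (by omega) hcell ?_⟩
  rintro b (rfl | rfl)
  exacts [(hlong j).1, (hlong j).2]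

theorem sampleLaw_real_not_hasMarker_le {c η : ℝ} (hc : 0 < c)
    (hprod : ∀ n, c ≤ ∏ i ∈ Finset.Icc 1 n, (1 - q i : ℝ) ^ i) {ℓ : ℕ}
    (hℓ : ∀ n, 1 - η ≤ ∏ i ∈ Finset.Ioc ℓ n, (1 - q i : ℝ) ^ i) {s J : ℕ}
    (hn : s + J * (2 * ℓ + w) ≤ n) :
    (sampleLaw q n).real {ω | ¬ HasMarker (sampleGraph ω) W w s (s + J * (2 * ℓ + w))} ≤
      (1 - graphProb q W w * c * c) ^ J + J * (η + η) := by
  refine (measureReal_mono (setOf_not_hasMarker_subset hn)).trans <|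
    (measureReal_union_le _ _).trans <|
    add_le_add (sampleLaw_real_iInter_compl_markerCellEvent_le hc hprod hn) ?_
  calc (sampleLaw q n).real (⋃ j : Fin J, longEdgeEvent n ℓ (blockStart s w ℓ j) ∪
        longEdgeEvent n ℓ (blockStart s w ℓ j + w))
      ≤ ∑ j : Fin J, (sampleLaw q n).real (longEdgeEvent n ℓ (blockStart s w ℓ j) ∪
          longEdgeEvent n ℓ (blockStart s w ℓ j + w)) := measureReal_iUnion_fintype_le _
    _ ≤ ∑ _j : Fin J, (η + η) := Finset.sum_le_sum fun j _ =>
        (measureReal_union_le _ _).trans (add_le_add (sampleLaw_real_longEdgeEvent_le hℓ n _)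
          (sampleLaw_real_longEdgeEvent_le hℓ n _))
    _ = J * (η + η) := by
        rw [Finset.sum_const, Finset.card_univ, Fintype.card_fin, nsmul_eq_mul]

theorem exists_sampleLaw_real_not_hasMarker_le (hq : ∀ i, (q i : ℝ) < 1) {c : ℝ} (hc : 0 < c)
    (hprod : ∀ n, c ≤ ∏ i ∈ Finset.Icc 1 n, (1 - q i : ℝ) ^ i)
    (hW : IsAdmissible (fun i => q i) W) (w : ℕ) {ε : ℝ} (hε : 0 < ε) :
    ∃ T, ∀ n s, s + T ≤ n →
      (sampleLaw q n).real {ω | ¬ HasMarker (sampleGraph ω) W w s (s + T)} ≤ ε := by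
  set δ := graphProb q W w * c * c
  have hδ : 0 < δ := mul_pos (mul_pos (graphProb_pos hq hW w) hc) hc
  obtain ⟨J, hJ⟩ := exists_pow_lt_of_lt_one (half_pos hε) (sub_lt_self 1 hδ)
  set η : ℝ := ε / (4 * (J + 1)) with hη
  obtain ⟨ℓ, hℓ⟩ := exists_prod_Ioc_ge hc hprod (show 0 < η by positivity)
  refine ⟨J * (2 * ℓ + w), fun n s hn => (sampleLaw_real_not_hasMarker_le hc hprod hℓ hn).trans ?_⟩
  have hJη : J * (η + η) ≤ ε / 2 := by
    rw [hη]
    field_simp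
    linarith
  linarith

end Estimates

/-! ### The first and the last vertices determine the sentence -/

section Ends

open MeasureTheory ProbabilityTheory

variable {n T : ℕ}

theorem efType_interval_sampleGraph (k : ℕ) (ω : Sample n) {s t : ℕ} (hst : t - s = T)
    (h : s + T ≤ n) :
    efType Lle k (Interval (sampleGraph ω) s t) =
      efType Lle k (Interval (sampleGraph fun e => ω (shiftEdge s h e)) 0 T) := by
  refine efType_interval_congr k hst (Nat.sub_zero T) fun i hi j hj => ?_
  rw [Nat.zero_add, Nat.zero_add]
  exact forall_adj_add_iff_of_forall_edge (fun e =>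
    (sampleGraph_adj_edge ω (shiftEdge s h e)).trans
      (sampleGraph_adj_edge (ω <| shiftEdge s h ·) e).symm) i hi j hj

/-- The potential edges among the first `T` and among the last `T` of `n` vertices. -/
def endsEdge (h : T + T ≤ n) : EdgeIdx T ⊕ EdgeIdx T → EdgeIdx n :=
  Sum.elim (shiftEdge 0 (by omega)) (shiftEdge (n - T) (by omega))

theorem endsEdge_injective (h : T + T ≤ n) : (endsEdge h).Injective := by
  refine (shiftEdge_injective _).sumElim (shiftEdge_injective _) fun e e' hee' => ?_
  simp only [shiftEdge, Subtype.mk.injEq, Prod.mk.injEq, Fin.mk.injEq] at hee'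
  omega

/-- The joint law of two independent random graphs on `[T]`. -/
noncomputable def endsLaw (q : ℕ → unitInterval) (T : ℕ) :
    Measure (EdgeIdx T ⊕ EdgeIdx T → Bool) :=
  Measure.pi fun e => bernoulliMeasure true false (q (Sum.elim edgeLength edgeLength e))

theorem sampleLaw_map_comp_endsEdge (q : ℕ → unitInterval) (h : T + T ≤ n) :
    (sampleLaw q n).map (fun ω e => ω (endsEdge h e)) = endsLaw q T := by
  rw [sampleLaw, measurePi_map_comp_injective _ (endsEdge_injective h), endsLaw]
  congr! with e
  rcases e with e | e <;> exact edgeLength_shiftEdge (by omega) e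

/-- The product of the `k`-types of two random graphs on `[T]`. -/
noncomputable def endsType (k : ℕ) (ω : EdgeIdx T ⊕ EdgeIdx T → Bool) : EFType Lle k :=
  efType Lle k (Interval (sampleGraph fun e => ω (.inl e)) 0 T) *
    efType Lle k (Interval (sampleGraph fun e => ω (.inr e)) 0 T)

theorem IsAbsorbing.efType_eq_endsType {p : ℕ → ℝ} {k w : ℕ} {W : SimpleGraph ℕ} {ω : Sample n}
    (hW : IsAbsorbing p k W w) (hω : IsAdmissible p (sampleGraph ω)) (h : T + T ≤ n)
    (hfirst : HasMarker (sampleGraph ω) W w 0 (0 + T))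
    (hlast : HasMarker (sampleGraph ω) W w (n - T) (n - T + T)) :
    efType Lle k (Interval (sampleGraph ω) 0 n) = endsType k fun e => ω (endsEdge h e) := by
  obtain ⟨a, -, haT, ha⟩ := hfirst
  obtain ⟨b, hTb, hbn, hb⟩ := hlast
  rw [hW.efType_eq_mul hω ha hb (by omega : a + w ≤ T) (by omega : T ≤ n - T) hTb (by omega),
    efType_interval_sampleGraph k ω (Nat.sub_zero T) (by omega),
    efType_interval_sampleGraph (T := T) k ω (by omega : n - (n - T) = T) (by omega)]
  rfl

theorem IsAbsorbing.abs_ProbLe_sub_le {q : ℕ → unitInterval} {ψ : Lle.Sentence}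
    {W : SimpleGraph ℕ} {w : ℕ} (hW : IsAbsorbing (fun i => q i) (quantifierRank ψ) W w)
    (h : T + T ≤ n) :
    |ProbLe (fun i => q i) n ψ - (endsLaw q T).real {ω | EFType.Satisfies ψ (endsType _ ω)}| ≤
      (sampleLaw q n).real {ω | ¬ HasMarker (sampleGraph ω) W w 0 (0 + T)} +
        (sampleLaw q n).real {ω | ¬ HasMarker (sampleGraph ω) W w (n - T) (n - T + T)} := by
  rw [ProbLe, Pr_eq_sampleLaw_real, ← sampleLaw_map_comp_endsEdge q h,
    map_measureReal_apply (measurable_of_finite _) (Set.toFinite _).measurableSet]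
  set noFirst := {ω : Sample n | ¬ HasMarker (sampleGraph ω) W w 0 (0 + T)}
  set noLast := {ω : Sample n | ¬ HasMarker (sampleGraph ω) W w (n - T) (n - T + T)}
  set sat := {ω : Sample n | SatLe ω ψ}
  set endsSat : Set (Sample n) :=
    (fun ω e => ω (endsEdge h e)) ⁻¹' {ω | EFType.Satisfies ψ (endsType _ ω)}
  have hsymmDiff : symmDiff sat endsSat ≤ᵐ[sampleLaw q n] (noFirst ∪ noLast : Set (Sample n)) := by
    filter_upwards [ae_sampleLaw_pos_of_present q] with ω hω
    refine not_imp_not.1 fun hmarkers => ?_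
    obtain ⟨hfirst, hlast⟩ := not_or.1 hmarkers
    have htype := hW.efType_eq_endsType (isAdmissible_sampleGraph hω) h
      (not_not.1 hfirst) (not_not.1 hlast)
    have hiff : ω ∈ sat ↔ ω ∈ endsSat := (satLe_iff ω ψ).trans (by rw [htype]; rfl)
    exact fun hmem => (Set.mem_symmDiff.1 hmem).elim (fun hs => hs.2 (hiff.1 hs.1))
      fun hs => hs.2 (hiff.2 hs.1)
  calc |(sampleLaw q n).real sat - (sampleLaw q n).real endsSat|
      ≤ (sampleLaw q n).real (symmDiff sat endsSat) := abs_measureReal_sub_le_measureReal_symmDiff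
        sat.toFinite.measurableSet.nullMeasurableSet
        endsSat.toFinite.measurableSet.nullMeasurableSet
    _ ≤ (sampleLaw q n).real (noFirst ∪ noLast) :=
        ENNReal.toReal_mono (measure_ne_top _ _) (measure_mono_ae hsymmDiff)
    _ ≤ (sampleLaw q n).real noFirst + (sampleLaw q n).real noLast := measureReal_union_le _ _

theorem exists_abs_ProbLe_sub_le {q : ℕ → unitInterval} (hq : ∀ i, (q i : ℝ) < 1) {c : ℝ}
    (hc : 0 < c) (hprod : ∀ n, c ≤ ∏ i ∈ Finset.Icc 1 n, (1 - q i : ℝ) ^ i) (ψ : Lle.Sentence)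
    {ε : ℝ} (hε : 0 < ε) :
    ∃ (r : ℝ) (N : ℕ), ∀ n ≥ N, |ProbLe (fun i => q i) n ψ - r| ≤ ε := by
  obtain ⟨W, w, hadm, habs⟩ := exists_isAbsorbing (fun i => q i) (quantifierRank ψ)
  obtain ⟨T, hT⟩ := exists_sampleLaw_real_not_hasMarker_le hq hc hprod hadm w (half_pos hε)
  refine ⟨(endsLaw q T).real {ω | EFType.Satisfies ψ (endsType _ ω)}, T + T, fun n hn => ?_⟩
  calc |ProbLe (fun i => q i) n ψ - (endsLaw q T).real {ω | EFType.Satisfies ψ (endsType _ ω)}|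
      ≤ _ := habs.abs_ProbLe_sub_le hn
    _ ≤ ε / 2 + ε / 2 := add_le_add (hT n 0 (by omega)) (hT n (n - T) (by omega))
    _ = ε := add_halves ε

end Ends

/-- If `0 ≤ p i < 1` and `∏_{i=1}^∞ (1 - p i)^i > 0` (i.e. the partial
products are bounded below by a positive constant), then for every sentence `ψ` of `L≤`,
`Prob(n, p̄; ψ)` converges. -/
theorem statement_11 (p : ℕ → ℝ) (hp : ∀ i, 0 ≤ p i ∧ p i < 1)
    (hprod : ∃ c : ℝ, 0 < c ∧ ∀ n : ℕ, c ≤ ∏ i ∈ Finset.Icc 1 n, (1 - p i) ^ i)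
    (ψ : Lle.Sentence) :
    ∃ ℓ : ℝ, Tendsto (fun n => ProbLe p n ψ) atTop (nhds ℓ) := by
  obtain ⟨c, hc, hprod⟩ := hprod
  let q : ℕ → unitInterval := fun i => ⟨p i, (hp i).1, (hp i).2.le⟩
  refine cauchySeq_tendsto_of_complete (Metric.cauchySeq_iff'.2 fun ε hε => ?_)
  obtain ⟨r, N, hr⟩ := exists_abs_ProbLe_sub_le (q := q) (fun i => (hp i).2) hc hprod ψ
    (show 0 < ε / 3 by positivity)
  refine ⟨N, fun n hn => ?_⟩
  calc dist (ProbLe p n ψ) (ProbLe p N ψ)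
      ≤ dist (ProbLe p n ψ) r + dist (ProbLe p N ψ) r := dist_triangle_right _ _ _
    _ ≤ ε / 3 + ε / 3 := add_le_add (hr n hn) (hr N le_rfl)
    _ < ε := by linarith

end RandomGraph
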